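/- Let m ≥ 3 and G = DA(m). There exists a polynomial P with nonnegative coefficients such that for every g ∈ G and every k ∈ ℕ, the number of elements g_1 ∈ G with ℓ(g_1) = k and (g_1, g_1^{-1}g) ∈ 𝒫(g) is at most P(k). -/

import Mathlib

namespace ArtinRD

/-- The alternating product `xyxy...` with `m` factors, starting with `x`. -/
def altProd {G : Type*} [Monoid G] : ℕ → G → G → G
  | 0, _, _ => 1
  | n + 1, x, y => x * altProd n y x

/-- The Artin relators determined by a Coxeter-type matrix `M` (`⊤` meaning `∞`). -/
def artinRels (n : ℕ) (M : Fin n → Fin n → ℕ∞) : Set (FreeGroup (Fin n)) :=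
  {r | ∃ i j : Fin n, i ≠ j ∧ ∃ m : ℕ, M i j = (m : ℕ∞) ∧
    r = altProd m (FreeGroup.of i) (FreeGroup.of j) *
        (altProd m (FreeGroup.of j) (FreeGroup.of i))⁻¹}

/-- The Artin group associated to the matrix `M`. -/
abbrev ArtinGroup (n : ℕ) (M : Fin n → Fin n → ℕ∞) : Type := PresentedGroup (artinRels n M)

/-- The standard generator `x_i` of the Artin group. -/
def gen (n : ℕ) (M : Fin n → Fin n → ℕ∞) (i : Fin n) : ArtinGroup n M := PresentedGroup.of i

/-- The set `A = {x_1^{±1}, ..., x_n^{±1}}` of standard letters. -/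
def genSet (n : ℕ) (M : Fin n → Fin n → ℕ∞) : Set (ArtinGroup n M) :=
  {g | ∃ i : Fin n, g = gen n M i ∨ g = (gen n M i)⁻¹}

/-- Word length of `g` with respect to a set `S`: the least `N` such that `g` is a
product of `N` elements of `S`. -/
noncomputable def wordLength {G : Type*} [Group G] (S : Set G) (g : G) : ℕ :=
  sInf {N : ℕ | ∃ w : List G, (∀ a ∈ w, a ∈ S) ∧ w.length = N ∧ w.prod = g}

/-- The word length on an Artin group with respect to the standard letters. -/
noncomputable def ℓA (n : ℕ) (M : Fin n → Fin n → ℕ∞) : ArtinGroup n M → ℕ :=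
  wordLength (genSet n M)

/-- A letter: a generator index together with a sign (`true` = positive). -/
abbrev Letter (n : ℕ) := Fin n × Bool

/-- The group element corresponding to a letter. -/
def toGen (n : ℕ) (M : Fin n → Fin n → ℕ∞) (l : Letter n) : ArtinGroup n M :=
  if l.2 then gen n M l.1 else (gen n M l.1)⁻¹

/-- The group element represented by a word over the letters. -/
def wordElt (n : ℕ) (M : Fin n → Fin n → ℕ∞) (w : List (Letter n)) : ArtinGroup n M :=
  (w.map (toGen n M)).prod

/-- A word is geodesic if its length equals the word length of the element it represents. -/
def IsGeodesic (n : ℕ) (M : Fin n → Fin n → ℕ∞) (w : List (Letter n)) : Prop :=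
  wordLength (genSet n M) (wordElt n M w) = w.length

/-- `h` is a left divisor of `g`: the factorisation `g = h ⬝ (h⁻¹ g)` is geodesic. -/
def IsLeftDiv {G : Type*} [Group G] (ℓ : G → ℕ) (h g : G) : Prop :=
  ℓ h + ℓ (h⁻¹ * g) = ℓ g

/-- `h` is a right divisor of `g`: the factorisation `g = (g h⁻¹) ⬝ h` is geodesic. -/
def IsRightDiv {G : Type*} [Group G] (ℓ : G → ℕ) (h g : G) : Prop :=
  ℓ (g * h⁻¹) + ℓ h = ℓ g

/-- The two-generator ("dihedral") subgroup `G(i,j)`. -/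
def Gij (n : ℕ) (M : Fin n → Fin n → ℕ∞) (i j : Fin n) : Subgroup (ArtinGroup n M) :=
  Subgroup.closure {gen n M i, gen n M j}

/-- The letters `x_i^{±1}, x_j^{±1}` as group elements. -/
def lettersIJ (n : ℕ) (M : Fin n → Fin n → ℕ∞) (i j : Fin n) : Set (ArtinGroup n M) :=
  {gen n M i, (gen n M i)⁻¹, gen n M j, (gen n M j)⁻¹}

/-- The maximal `{x_i,x_j}`-prefix of a word. -/
def ijPrefix (n : ℕ) (i j : Fin n) (w : List (Letter n)) : List (Letter n) :=
  w.takeWhile (fun l => l.1 == i || l.1 == j)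

/-- `h` is a left divisor of `g` lying in `G(i,j)` of maximal word length. -/
def IsMaxLD (n : ℕ) (M : Fin n → Fin n → ℕ∞) (i j : Fin n) (g h : ArtinGroup n M) : Prop :=
  h ∈ Gij n M i j ∧ IsLeftDiv (ℓA n M) h g ∧
    ∀ h' ∈ Gij n M i j, IsLeftDiv (ℓA n M) h' g → ℓA n M h' ≤ ℓA n M h

/-- `h` is a right divisor of `g` lying in `G(i,j)` of maximal word length. -/
def IsMaxRD (n : ℕ) (M : Fin n → Fin n → ℕ∞) (i j : Fin n) (g h : ArtinGroup n M) : Prop :=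
  h ∈ Gij n M i j ∧ IsRightDiv (ℓA n M) h g ∧
    ∀ h' ∈ Gij n M i j, IsRightDiv (ℓA n M) h' g → ℓA n M h' ≤ ℓA n M h

/-- The Coxeter matrix of the dihedral Artin group `DA(m)`. -/
def DMat (m : ℕ) : Fin 2 → Fin 2 → ℕ∞ := fun i j => if i = j then 1 else (m : ℕ∞)

/-- The dihedral Artin group `DA(m) = ⟨x₁, x₂ ∣ ₘ(x₁,x₂) = ₘ(x₂,x₁)⟩`. -/
abbrev DA (m : ℕ) : Type := ArtinGroup 2 (DMat m)

/-- The word length on `DA(m)` with respect to `{x₁^{±1}, x₂^{±1}}`. -/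
noncomputable def ℓD (m : ℕ) : DA m → ℕ := ℓA 2 (DMat m)

/-- The Garside element `Δ = ₘ(x₁,x₂)` of `DA(m)`. -/
def Delta (m : ℕ) : DA m := altProd m (gen 2 (DMat m) 0) (gen 2 (DMat m) 1)

/-- A positive element of `DA(m)`: a product of the generators. -/
def posElt (m : ℕ) (g : DA m) : Prop :=
  g ∈ Submonoid.closure ({gen 2 (DMat m) 0, gen 2 (DMat m) 1} : Set (DA m))

/-- A negative element of `DA(m)`: a product of the inverses of the generators. -/
def negElt (m : ℕ) (g : DA m) : Prop :=
  g ∈ Submonoid.closure ({(gen 2 (DMat m) 0)⁻¹, (gen 2 (DMat m) 1)⁻¹} : Set (DA m))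

/-- `k` is the largest exponent such that `Δ^k` is a left divisor of `g`
(i.e. `d(g) = k` for a positive element `g`). -/
def IsMaxDeltaPow (m : ℕ) (k : ℕ) (g : DA m) : Prop :=
  IsLeftDiv (ℓD m) (Delta m ^ k) g ∧ ∀ k' : ℕ, IsLeftDiv (ℓD m) (Delta m ^ k') g → k' ≤ k

/-- `k` is the largest exponent such that `Δ^{-k}` is a left divisor of `g`
(i.e. `d(g) = k` for a negative element `g`). -/
def IsMaxNegDeltaPow (m : ℕ) (k : ℕ) (g : DA m) : Prop :=
  IsLeftDiv (ℓD m) ((Delta m)⁻¹ ^ k) g ∧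
    ∀ k' : ℕ, IsLeftDiv (ℓD m) ((Delta m)⁻¹ ^ k') g → k' ≤ k

/-- The set of letters `{x₁^{±1}, x₂^{±1}}` of `DA(m)`. -/
def lettersDA (m : ℕ) : Set (DA m) :=
  {gen 2 (DMat m) 0, (gen 2 (DMat m) 0)⁻¹, gen 2 (DMat m) 1, (gen 2 (DMat m) 1)⁻¹}

/-- `h` has a representative of the form `a^s b^t` (at most two syllables). -/
def TwoSyllable (m : ℕ) (h : DA m) : Prop :=
  ∃ a ∈ lettersDA m, ∃ b ∈ lettersDA m, ∃ s t : ℕ, h = a ^ s * b ^ t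

/-- The permissible factorisations `𝒫(g)` of an element `g` of `DA(m)`:
all geodesic factorisations if `g` is unsigned; for signed `g`, those geodesic
factorisations lying in `𝒫¹(g) ∪ 𝒫²(g)`. -/
def PermDA (m : ℕ) (g : DA m) (q : DA m × DA m) : Prop :=
  q.1 * q.2 = g ∧ ℓD m q.1 + ℓD m q.2 = ℓD m g ∧
  ((posElt m g ∨ negElt m g) →
    (TwoSyllable m q.1 ∨ TwoSyllable m q.2 ∨
     (posElt m g ∧ posElt m q.1 ∧ posElt m q.2 ∧
       ∃ k₁ k₂ : ℕ, IsMaxDeltaPow m k₁ q.1 ∧ IsMaxDeltaPow m k₂ q.2 ∧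
         IsMaxDeltaPow m (k₁ + k₂) g) ∨
     (negElt m g ∧ negElt m q.1 ∧ negElt m q.2 ∧
       ∃ k₁ k₂ : ℕ, IsMaxNegDeltaPow m k₁ q.1 ∧ IsMaxNegDeltaPow m k₂ q.2 ∧
         IsMaxNegDeltaPow m (k₁ + k₂) g)))

/-!
The Cayley graph of `DA(m)` modulo `Δ^ℤ` is a cactus: a tree-like arrangement of `m`-gons in which
every vertex lies on exactly two of them. An element is determined by its vertex and its exponent
sum. If no nontrivial power of `Δ` splits off a geodesic factorisation of `g`, then a geodesic from
`1` to `g` never enters and leaves the part of the cactus behind a vertex, since the loop based at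
that vertex would be such a power. Hence the left divisors of `g` lie above the chain of `m`-gons
from the root to the vertex of `g`, which has only `m` vertices at each depth; this gives a
quadratic bound for elements that are neither positive nor negative.

A positive `g` is `Δ^d` times a `Δ`-free element, and factorisations for which `d` is additive
reduce to the previous case. For the remaining ones, depth shows that `x₁^i x₂^j` has length
`|i| + |j|` for all integers `i`, `j`, which leaves few elements `a^s b^t` of length `k`, and few
such right divisors of `g` with a complement of length `k`. Inverting the generators exchanges
positive and negative elements.
-/

section WordLength

variable {G H : Type*} [Group G] [Group H] {S : Set G} {T : Set H}

lemma wordLength_prod_le {w : List G} (hw : ∀ a ∈ w, a ∈ S) :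
    wordLength S w.prod ≤ w.length :=
  Nat.sInf_le ⟨w, hw, rfl, rfl⟩

lemma exists_list_length_eq_wordLength (hS : Submonoid.closure S = ⊤) (g : G) :
    ∃ w : List G, (∀ a ∈ w, a ∈ S) ∧ w.length = wordLength S g ∧ w.prod = g := by
  obtain ⟨w, hw, hg⟩ := Submonoid.exists_list_of_mem_closure (hS ▸ Submonoid.mem_top g)
  exact Nat.sInf_mem (s := {N | ∃ w : List G, (∀ a ∈ w, a ∈ S) ∧ w.length = N ∧ w.prod = g})
    ⟨_, w, hw, rfl, hg⟩

lemma wordLength_one : wordLength S (1 : G) = 0 :=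
  Nat.le_zero.1 (wordLength_prod_le (w := []) (by simp))

lemma wordLength_le_one {a : G} (ha : a ∈ S) : wordLength S a ≤ 1 := by
  simpa using wordLength_prod_le (w := [a]) (by simpa using ha)

lemma eq_one_of_wordLength_eq_zero (hS : Submonoid.closure S = ⊤) {g : G}
    (hg : wordLength S g = 0) : g = 1 := by
  obtain ⟨w, -, hlen, rfl⟩ := exists_list_length_eq_wordLength hS g
  rw [List.length_eq_zero_iff.1 (hlen.trans hg), List.prod_nil]

lemma wordLength_mul_le (hS : Submonoid.closure S = ⊤) (g h : G) :
    wordLength S (g * h) ≤ wordLength S g + wordLength S h := by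
  obtain ⟨v, hv, hvlen, hvg⟩ := exists_list_length_eq_wordLength hS g
  obtain ⟨w, hw, hwlen, hwh⟩ := exists_list_length_eq_wordLength hS h
  rw [← hvlen, ← hwlen, ← hvg, ← hwh, ← List.length_append, ← List.prod_append]
  exact wordLength_prod_le fun a ha => (List.mem_append.1 ha).elim (hv a) (hw a)

lemma wordLength_map_le (hS : Submonoid.closure S = ⊤) (f : G →* H) (hf : Set.MapsTo f S T)
    (g : G) : wordLength T (f g) ≤ wordLength S g := by
  obtain ⟨w, hw, hlen, hg⟩ := exists_list_length_eq_wordLength hS g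
  rw [← hlen, ← hg, map_list_prod, ← List.length_map f]
  exact wordLength_prod_le (List.forall_mem_map.2 fun a ha => hf (hw a ha))

lemma le_add_wordLength (hS : Submonoid.closure S = ⊤) {f : G → ℕ}
    (hf : ∀ g, ∀ a ∈ S, f (g * a) ≤ f g + 1) (g h : G) : f (g * h) ≤ f g + wordLength S h := by
  obtain ⟨w, hw, hlen, hh⟩ := exists_list_length_eq_wordLength hS h
  rw [← hlen, ← hh]
  clear hlen hh
  induction w generalizing g with
  | nil => simp
  | cons a w ih =>
    have hstep := hf g a (hw a List.mem_cons_self)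
    have htail := ih (g * a) fun b hb => hw b (List.mem_cons_of_mem a hb)
    rw [List.prod_cons, List.length_cons, ← mul_assoc]
    omega

lemma wordLength_inv (hS : Submonoid.closure S = ⊤) (hinv : ∀ a ∈ S, a⁻¹ ∈ S) (g : G) :
    wordLength S g⁻¹ = wordLength S g := by
  have hle (h : G) : wordLength S h⁻¹ ≤ wordLength S h := by
    have hstep (g : G) (a : G) (ha : a ∈ S) :
        wordLength S (g * a)⁻¹ ≤ wordLength S g⁻¹ + 1 := by
      have hmul := wordLength_mul_le hS a⁻¹ g⁻¹
      have hletter := wordLength_le_one (hinv a ha)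
      rw [mul_inv_rev]
      omega
    simpa [wordLength_one] using le_add_wordLength hS (f := fun g => wordLength S g⁻¹) hstep 1 h
  exact (hle g).antisymm (by simpa using hle g⁻¹)

lemma exists_letter_of_not_mul (hS : Submonoid.closure S = ⊤) {A : G → Prop} {g h : G}
    (hg : A g) (hgh : ¬ A (g * h)) :
    ∃ p, ∃ a ∈ S, ∃ q, p * a * q = h ∧ wordLength S p + 1 + wordLength S q ≤ wordLength S h ∧
      A (g * p) ∧ ¬ A (g * p * a) := by
  obtain ⟨w, hw, hlen, rfl⟩ := exists_list_length_eq_wordLength hS h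
  suffices ∃ (u : List G) (a : G) (v : List G), w = u ++ a :: v ∧
      A (g * u.prod) ∧ ¬ A (g * u.prod * a) by
    obtain ⟨u, a, v, rfl, hu, ha⟩ := this
    have hulen := wordLength_prod_le fun b hb => hw b (List.mem_append_left _ hb)
    have hvlen := wordLength_prod_le fun b hb =>
      hw b (List.mem_append_right _ (List.mem_cons_of_mem a hb))
    rw [List.length_append, List.length_cons] at hlen
    exact ⟨u.prod, a, hw a (by simp), v.prod, by simp [mul_assoc], by omega, hu, ha⟩
  clear hlen hw
  induction w generalizing g with
  | nil => simp_all
  | cons a w ih =>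
    by_cases ha : A (g * a)
    · obtain ⟨u, b, v, rfl, hu, hb⟩ := ih ha (by simpa [mul_assoc] using hgh)
      exact ⟨a :: u, b, v, rfl, by simpa [mul_assoc] using hu, by simpa [mul_assoc] using hb⟩
    · exact ⟨[], a, w, rfl, by simpa using hg, by simpa using ha⟩

end WordLength

section AlternatingProduct

variable {G H : Type*}

lemma map_altProd [Monoid G] [Monoid H] (f : G →* H) (n : ℕ) (x y : G) :
    f (altProd n x y) = altProd n (f x) (f y) := by
  induction n generalizing x y with
  | zero => exact map_one f
  | succ n ih => rw [altProd, map_mul, ih, altProd]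

/-- The alternating product of `n` factors of a pair `a` of elements, starting with `a s`.
Indexing the pair by `ZMod 2` makes the `j`-th factor `a (s + j)`. -/
def alt [Monoid G] (a : ZMod 2 → G) (n : ℕ) (s : ZMod 2) : G := altProd n (a s) (a (s + 1))

lemma add_one_add_one_eq_self (s : ZMod 2) : s + 1 + 1 = s := by revert s; decide

lemma add_one_ne (s : ZMod 2) : s + 1 ≠ s := by revert s; decide

lemma add_one_eq_of_ne {s x : ZMod 2} : s ≠ x → s + 1 = x := by revert s x; decide

section Monoid

variable [Monoid G] [Monoid H] (a : ZMod 2 → G)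

lemma alt_zero (s : ZMod 2) : alt a 0 s = 1 := rfl

lemma alt_succ (n : ℕ) (s : ZMod 2) : alt a (n + 1) s = a s * alt a n (s + 1) := by
  rw [alt, alt, add_one_add_one_eq_self, altProd]

lemma alt_succ' (n : ℕ) (s : ZMod 2) : alt a (n + 1) s = alt a n s * a (s + n) := by
  induction n generalizing s with
  | zero => simp [alt, altProd]
  | succ n ih =>
    rw [alt_succ, ih, ← mul_assoc, ← alt_succ]
    congr 2
    push_cast
    ring

lemma map_alt (f : G →* H) (n : ℕ) (s : ZMod 2) : f (alt a n s) = alt (f ∘ a) n s :=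
  map_altProd f n _ _

end Monoid

lemma alt_inv [Group G] (a : ZMod 2 → G) (n : ℕ) (s : ZMod 2) :
    alt a⁻¹ n s = (alt a n (s + n + 1))⁻¹ := by
  induction n generalizing s with
  | zero => simp [alt_zero]
  | succ n ih =>
    rw [alt_succ, alt_succ', ih, mul_inv_rev, Pi.inv_apply]
    have hlast : s + ((n + 1 : ℕ) : ZMod 2) + 1 + n = s := by
      push_cast
      linear_combination (n + 1 : ZMod 2) * CharTwo.two_eq_zero (R := ZMod 2)
    rw [hlast]
    congr 3
    push_cast
    ring

end AlternatingProduct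

section Generators

/-- The generators `x₁`, `x₂` of `DA(m)`, indexed by `ZMod 2` (which is `Fin 2` by definition) so
that alternating words can be indexed arithmetically. -/
def atom (m : ℕ) (i : ZMod 2) : DA m := gen 2 (DMat m) i

variable {m : ℕ}

lemma mem_genSet_DMat {a : DA m} :
    a ∈ genSet 2 (DMat m) ↔ ∃ x, a = atom m x ∨ a = (atom m x)⁻¹ :=
  Iff.rfl

lemma inv_mem_genSet {n : ℕ} {M : Fin n → Fin n → ℕ∞} {a : ArtinGroup n M}
    (ha : a ∈ genSet n M) : a⁻¹ ∈ genSet n M := by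
  obtain ⟨i, rfl | rfl⟩ := ha
  exacts [⟨i, .inr rfl⟩, ⟨i, .inl (inv_inv _)⟩]

lemma closure_genSet (n : ℕ) (M : Fin n → Fin n → ℕ∞) : Submonoid.closure (genSet n M) = ⊤ := by
  have hgen : genSet n M = Set.range (gen n M) ∪ (Set.range (gen n M))⁻¹ := by
    ext g
    simp only [genSet, Set.mem_union, Set.mem_range, Set.mem_inv, Set.mem_ofPred_eq, exists_or,
      eq_comm (a := g), inv_eq_iff_eq_inv]
  rw [hgen, ← Subgroup.closure_toSubmonoid]
  exact congrArg Subgroup.toSubmonoid (PresentedGroup.closure_range_of (artinRels n M))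

lemma alt_atom_rel (m : ℕ) : alt (atom m) m 0 = alt (atom m) m 1 := by
  have hrel := PresentedGroup.mk_eq_mk_of_mul_inv_mem (rels := artinRels 2 (DMat m))
    (x := altProd m (FreeGroup.of 0) (FreeGroup.of 1))
    (y := altProd m (FreeGroup.of 1) (FreeGroup.of 0))
    ⟨0, 1, by decide, m, by simp [DMat], rfl⟩
  rwa [map_altProd, map_altProd] at hrel

lemma alt_atom_eq_Delta (s : ZMod 2) : alt (atom m) m s = Delta m := by
  fin_cases s
  exacts [rfl, (alt_atom_rel m).symm]

lemma lift_artinRels_eq_one {H : Type*} [Group H] {f : Fin 2 → H}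
    (h : altProd m (f 0) (f 1) = altProd m (f 1) (f 0)) :
    ∀ r ∈ artinRels 2 (DMat m), FreeGroup.lift f r = 1 := by
  rintro r ⟨i, j, hij, n, hn, rfl⟩
  obtain rfl : m = n := by simpa [DMat, hij] using hn
  rw [map_mul, map_inv, map_altProd, map_altProd, FreeGroup.lift_apply_of, FreeGroup.lift_apply_of,
    mul_inv_eq_one]
  fin_cases i <;> fin_cases j
  exacts [absurd rfl hij, h, h.symm, absurd rfl hij]

/-- The universal property of `DA(m)`: a pair of elements satisfying the braid relation of length
`m` determines a homomorphism. -/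
def DA.lift {H : Type*} [Group H] (f : ZMod 2 → H) (h : alt f m 0 = alt f m 1) : DA m →* H :=
  PresentedGroup.toGroup (lift_artinRels_eq_one h)

lemma DA.lift_atom {H : Type*} [Group H] (f : ZMod 2 → H) (h : alt f m 0 = alt f m 1)
    (x : ZMod 2) : DA.lift f h (atom m x) = f x :=
  PresentedGroup.toGroup.of (lift_artinRels_eq_one h)

lemma DA.hom_ext {H : Type*} [Group H] {f f' : DA m →* H}
    (h : ∀ x, f (atom m x) = f' (atom m x)) : f = f' :=
  PresentedGroup.ext h

lemma ℓD_one : ℓD m 1 = 0 := wordLength_one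

lemma ℓD_mul_le (g h : DA m) : ℓD m (g * h) ≤ ℓD m g + ℓD m h :=
  wordLength_mul_le (closure_genSet 2 (DMat m)) g h

lemma ℓD_inv (g : DA m) : ℓD m g⁻¹ = ℓD m g :=
  wordLength_inv (closure_genSet 2 (DMat m)) (fun _ => inv_mem_genSet) g

lemma eq_one_of_ℓD_eq_zero {g : DA m} (hg : ℓD m g = 0) : g = 1 :=
  eq_one_of_wordLength_eq_zero (closure_genSet 2 (DMat m)) hg

lemma ℓD_atom_le (x : ZMod 2) : ℓD m (atom m x) ≤ 1 :=
  wordLength_le_one (mem_genSet_DMat.2 ⟨x, .inl rfl⟩)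

lemma ℓD_pow_le (g : DA m) (n : ℕ) : ℓD m (g ^ n) ≤ n * ℓD m g := by
  induction n with
  | zero => simp [ℓD_one]
  | succ n ih => rw [pow_succ, Nat.succ_mul]; exact (ℓD_mul_le _ _).trans (by omega)

lemma ℓD_zpow_le (g : DA m) (n : ℤ) : ℓD m (g ^ n) ≤ n.natAbs * ℓD m g := by
  obtain ⟨n, rfl | rfl⟩ := n.eq_nat_or_neg
  · simpa using ℓD_pow_le g n
  · simpa [ℓD_inv] using ℓD_pow_le g n

lemma ℓD_alt_le (n : ℕ) (s : ZMod 2) : ℓD m (alt (atom m) n s) ≤ n := by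
  induction n generalizing s with
  | zero => exact (ℓD_one (m := m)).le
  | succ n ih =>
    have hmul := ℓD_mul_le (atom m s) (alt (atom m) n (s + 1))
    have hhead := ℓD_atom_le (m := m) s
    have htail := ih (s + 1)
    rw [alt_succ]
    omega

end Generators

section Degree

variable {m : ℕ}

/-- The exponent-sum homomorphism of `DA(m)`. -/
def degHom (m : ℕ) : DA m →* Multiplicative ℤ := DA.lift (fun _ => Multiplicative.ofAdd 1) rfl

/-- The exponent sum of an element of `DA(m)`. -/
def deg (g : DA m) : ℤ := (degHom m g).toAdd

lemma deg_one : deg (1 : DA m) = 0 := by simp [deg]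

lemma deg_mul (g h : DA m) : deg (g * h) = deg g + deg h := by simp [deg]

lemma deg_inv (g : DA m) : deg g⁻¹ = -deg g := by simp [deg]

lemma deg_zpow (g : DA m) (n : ℤ) : deg (g ^ n) = n * deg g := by simp [deg]

lemma deg_atom (x : ZMod 2) : deg (atom m x) = 1 :=
  congrArg Multiplicative.toAdd (DA.lift_atom _ _ x)

lemma deg_alt (n : ℕ) (s : ZMod 2) : deg (alt (atom m) n s) = n := by
  induction n generalizing s with
  | zero => exact deg_one
  | succ n ih => rw [alt_succ, deg_mul, deg_atom, ih]; push_cast; ring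

lemma deg_Delta : deg (Delta m) = m := deg_alt m 0

lemma natAbs_deg_le (g : DA m) : (deg g).natAbs ≤ ℓD m g := by
  have hstep (g a : DA m) (ha : a ∈ genSet 2 (DMat m)) :
      (deg (g * a)).natAbs ≤ (deg g).natAbs + 1 := by
    obtain ⟨x, rfl | rfl⟩ := mem_genSet_DMat.1 ha <;>
      simp only [deg_mul, deg_inv, deg_atom] <;> omega
  simpa [deg_one, ℓD, ℓA] using
    le_add_wordLength (closure_genSet 2 (DMat m)) (f := fun g => (deg g).natAbs) hstep 1 g

lemma deg_le_ℓD (g : DA m) : deg g ≤ ℓD m g := by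
  have := natAbs_deg_le g
  omega

lemma posElt_atom (x : ZMod 2) : posElt m (atom m x) := by
  apply Submonoid.subset_closure
  fin_cases x
  exacts [.inl rfl, .inr rfl]

lemma exists_atom_inv_of_not_posElt {g : DA m} (hg : ¬ posElt m g) :
    ∃ p x q, p * (atom m x)⁻¹ * q = g ∧ ℓD m p + 1 + ℓD m q ≤ ℓD m g := by
  obtain ⟨p, a, ha, q, hpq, hlen, hp, hpa⟩ := exists_letter_of_not_mul
    (closure_genSet 2 (DMat m)) (A := posElt m) (g := 1) (h := g) (Submonoid.one_mem _)
    (by rwa [one_mul])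
  rw [one_mul] at hp hpa
  obtain ⟨x, rfl | rfl⟩ := mem_genSet_DMat.1 ha
  · exact absurd (Submonoid.mul_mem _ hp (posElt_atom x)) hpa
  · exact ⟨p, x, q, hpq, hlen⟩

lemma posElt_iff_deg_eq {g : DA m} : posElt m g ↔ deg g = ℓD m g := by
  constructor
  · intro hg
    induction hg using Submonoid.closure_induction with
    | mem a ha =>
      obtain ⟨x, rfl⟩ : ∃ x, a = atom m x := by
        rcases ha with rfl | rfl
        exacts [⟨0, rfl⟩, ⟨1, rfl⟩]
      have hle := ℓD_atom_le (m := m) x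
      have hge := deg_le_ℓD (atom m x)
      rw [deg_atom] at hge ⊢
      omega
    | one => simp [deg_one, ℓD_one]
    | mul g h _ _ hg hh =>
      have hle := ℓD_mul_le g h
      have hge := deg_le_ℓD (g * h)
      rw [deg_mul] at hge ⊢
      omega
  · intro hdeg
    by_contra hg
    obtain ⟨p, x, q, rfl, hlen⟩ := exists_atom_inv_of_not_posElt hg
    have hp := deg_le_ℓD p
    have hq := deg_le_ℓD q
    rw [deg_mul, deg_mul, deg_inv, deg_atom] at hdeg
    omega

lemma posElt_of_mul {g h : DA m} (hgh : posElt m (g * h))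
    (hlen : ℓD m g + ℓD m h = ℓD m (g * h)) : posElt m g ∧ posElt m h := by
  simp only [posElt_iff_deg_eq, deg_mul] at hgh ⊢
  have hg := deg_le_ℓD g
  have hh := deg_le_ℓD h
  omega

lemma posElt_Delta_pow (n : ℕ) : posElt m (Delta m ^ n) := by
  refine Submonoid.pow_mem _ (posElt_iff_deg_eq.2 ?_) n
  have hle : ℓD m (Delta m) ≤ m := ℓD_alt_le m 0
  have hge := deg_le_ℓD (Delta m)
  rw [deg_Delta] at hge ⊢
  omega

lemma ℓD_Delta_pow (n : ℕ) : ℓD m (Delta m ^ n) = n * m := by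
  have hdeg := posElt_iff_deg_eq.1 (posElt_Delta_pow (m := m) n)
  rw [← zpow_natCast, deg_zpow, deg_Delta] at hdeg
  exact_mod_cast hdeg.symm

lemma ℓD_Delta_zpow (n : ℤ) : ℓD m (Delta m ^ n) = n.natAbs * m := by
  obtain ⟨n, rfl | rfl⟩ := n.eq_nat_or_neg
  · simpa using ℓD_Delta_pow n
  · simpa [ℓD_inv] using ℓD_Delta_pow n

end Degree

section DeltaConjugation

variable {m : ℕ}

lemma Delta_mul_atom (x : ZMod 2) : Delta m * atom m x = atom m (x + m) * Delta m := by
  have hx : x + m + m = x := by rw [add_assoc, CharTwo.add_self_eq_zero, add_zero]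
  have h := (alt_succ' (atom m) m (x + m)).symm.trans (alt_succ (atom m) m (x + m))
  rwa [alt_atom_eq_Delta, alt_atom_eq_Delta, hx] at h

lemma Delta_inv_mul_atom (x : ZMod 2) :
    (Delta m)⁻¹ * atom m x = atom m (x + m) * (Delta m)⁻¹ := by
  have hx : x + m + m = x := by rw [add_assoc, CharTwo.add_self_eq_zero, add_zero]
  rw [inv_mul_eq_iff_eq_mul, ← mul_assoc, Delta_mul_atom, hx, mul_inv_cancel_right]

lemma Delta_zpow_mul_atom (c : ℤ) (x : ZMod 2) :
    Delta m ^ c * atom m x = atom m (x + m * c) * Delta m ^ c := by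
  induction c generalizing x with
  | zero => simp
  | succ c ih =>
    rw [zpow_add_one, mul_assoc, Delta_mul_atom, ← mul_assoc, ih, mul_assoc]
    congr 2
    push_cast
    ring
  | pred c ih =>
    rw [zpow_sub_one, mul_assoc, Delta_inv_mul_atom, ← mul_assoc, ih, mul_assoc]
    congr 2
    push_cast
    linear_combination (m : ZMod 2) * CharTwo.two_eq_zero (R := ZMod 2)

lemma ℓD_Delta_zpow_conj (c : ℤ) (g : DA m) :
    ℓD m (Delta m ^ c * g * (Delta m ^ c)⁻¹) = ℓD m g := by
  have hle (c : ℤ) (g : DA m) : ℓD m (Delta m ^ c * g * (Delta m ^ c)⁻¹) ≤ ℓD m g := by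
    refine wordLength_map_le (closure_genSet 2 (DMat m)) (MulAut.conj (Delta m ^ c)).toMonoidHom
      (fun a ha => ?_) g
    have hconj (x : ZMod 2) :
        Delta m ^ c * atom m x * (Delta m ^ c)⁻¹ = atom m (x + m * c) := by
      rw [Delta_zpow_mul_atom, mul_inv_cancel_right]
    obtain ⟨x, rfl | rfl⟩ := mem_genSet_DMat.1 ha
    · exact mem_genSet_DMat.2 ⟨x + m * c, .inl (hconj x)⟩
    · exact mem_genSet_DMat.2 ⟨x + m * c, .inr (by rw [map_inv]; exact congrArg _ (hconj x))⟩
  refine (hle c g).antisymm ?_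
  have hundo : Delta m ^ (-c) * (Delta m ^ c * g * (Delta m ^ c)⁻¹) * (Delta m ^ (-c))⁻¹ = g := by
    group
  simpa only [hundo] using hle (-c) (Delta m ^ c * g * (Delta m ^ c)⁻¹)

end DeltaConjugation

section GeneratorInversion

variable {m : ℕ}

/-- The involution of `DA(m)` that inverts both generators. It exchanges positive and negative
elements. -/
def genInv (m : ℕ) : DA m →* DA m :=
  DA.lift (atom m)⁻¹ (by simp only [alt_inv, alt_atom_eq_Delta])

lemma genInv_atom (x : ZMod 2) : genInv m (atom m x) = (atom m x)⁻¹ := DA.lift_atom _ _ x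

lemma genInv_Delta : genInv m (Delta m) = (Delta m)⁻¹ := by
  have hcomp : genInv m ∘ atom m = (atom m)⁻¹ := funext genInv_atom
  rw [← alt_atom_eq_Delta 0, map_alt, hcomp, alt_inv, alt_atom_eq_Delta, alt_atom_eq_Delta]

lemma genInv_genInv (g : DA m) : genInv m (genInv m g) = g := by
  have hcomp : (genInv m).comp (genInv m) = MonoidHom.id (DA m) :=
    DA.hom_ext fun x => by
      rw [MonoidHom.comp_apply, genInv_atom, map_inv, genInv_atom, inv_inv, MonoidHom.id_apply]
  exact DFunLike.congr_fun hcomp g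

lemma genInv_injective : Function.Injective (genInv m) :=
  Function.Involutive.injective genInv_genInv

lemma genInv_mem_genSet {a : DA m} (ha : a ∈ genSet 2 (DMat m)) :
    genInv m a ∈ genSet 2 (DMat m) := by
  obtain ⟨x, rfl | rfl⟩ := mem_genSet_DMat.1 ha
  · exact mem_genSet_DMat.2 ⟨x, .inr (genInv_atom x)⟩
  · exact mem_genSet_DMat.2 ⟨x, .inl (by rw [map_inv, genInv_atom, inv_inv])⟩

lemma ℓD_genInv (g : DA m) : ℓD m (genInv m g) = ℓD m g := by
  have hle (g : DA m) : ℓD m (genInv m g) ≤ ℓD m g :=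
    wordLength_map_le (closure_genSet 2 (DMat m)) (genInv m) (fun _ => genInv_mem_genSet) g
  exact (hle g).antisymm (by simpa only [genInv_genInv] using hle (genInv m g))

lemma isLeftDiv_genInv_iff {g h : DA m} :
    IsLeftDiv (ℓD m) (genInv m h) (genInv m g) ↔ IsLeftDiv (ℓD m) h g := by
  simp only [IsLeftDiv, ← map_inv, ← map_mul, ℓD_genInv]

lemma posElt_genInv_iff {g : DA m} : posElt m (genInv m g) ↔ negElt m g := by
  constructor
  · intro hg
    have hle : Submonoid.closure {gen 2 (DMat m) 0, gen 2 (DMat m) 1} ≤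
        (Submonoid.closure {(gen 2 (DMat m) 0)⁻¹, (gen 2 (DMat m) 1)⁻¹}).comap (genInv m) := by
      rw [Submonoid.closure_le]
      rintro a (rfl | rfl)
      exacts [Submonoid.subset_closure (.inl (genInv_atom 0)),
        Submonoid.subset_closure (.inr (genInv_atom 1))]
    exact genInv_genInv g ▸ hle hg
  · intro hg
    have hle : Submonoid.closure {(gen 2 (DMat m) 0)⁻¹, (gen 2 (DMat m) 1)⁻¹} ≤
        (Submonoid.closure {gen 2 (DMat m) 0, gen 2 (DMat m) 1}).comap (genInv m) := by
      have hinv (x : ZMod 2) : genInv m (atom m x)⁻¹ = atom m x := by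
        rw [map_inv, genInv_atom, inv_inv]
      rw [Submonoid.closure_le]
      rintro a (rfl | rfl)
      exacts [Submonoid.subset_closure (.inl (hinv 0)), Submonoid.subset_closure (.inr (hinv 1))]
    exact hle hg

lemma negElt_genInv_iff {g : DA m} : negElt m (genInv m g) ↔ posElt m g := by
  rw [← posElt_genInv_iff, genInv_genInv]

lemma lettersDA_eq_genSet (m : ℕ) : lettersDA m = genSet 2 (DMat m) := by
  ext a
  simp only [lettersDA, genSet, Set.mem_insert_iff, Set.mem_singleton_iff, Set.mem_ofPred_eq,
    Fin.exists_fin_two, or_assoc]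

lemma TwoSyllable.genInv {h : DA m} : TwoSyllable m h → TwoSyllable m (genInv m h) := by
  rintro ⟨a, ha, b, hb, s, t, rfl⟩
  rw [lettersDA_eq_genSet] at ha hb
  refine ⟨_, ?_, _, ?_, s, t, by rw [map_mul, map_pow, map_pow]⟩ <;> rw [lettersDA_eq_genSet]
  exacts [genInv_mem_genSet ha, genInv_mem_genSet hb]

lemma isMaxDeltaPow_genInv_iff {k : ℕ} {g : DA m} :
    IsMaxDeltaPow m k (genInv m g) ↔ IsMaxNegDeltaPow m k g := by
  have hdiv (k : ℕ) : IsLeftDiv (ℓD m) (Delta m ^ k) (genInv m g) ↔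
      IsLeftDiv (ℓD m) ((Delta m)⁻¹ ^ k) g := by
    rw [← isLeftDiv_genInv_iff, genInv_genInv, map_pow, genInv_Delta]
  simp only [IsMaxDeltaPow, IsMaxNegDeltaPow, hdiv]

lemma isMaxNegDeltaPow_genInv_iff {k : ℕ} {g : DA m} :
    IsMaxNegDeltaPow m k (genInv m g) ↔ IsMaxDeltaPow m k g := by
  rw [← isMaxDeltaPow_genInv_iff, genInv_genInv]

lemma PermDA.genInv {g : DA m} {q : DA m × DA m} (hq : PermDA m g q) :
    PermDA m (genInv m g) (genInv m q.1, genInv m q.2) := by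
  obtain ⟨hprod, hlen, hsign⟩ := hq
  refine ⟨by rw [← map_mul, hprod], by simpa only [ℓD_genInv] using hlen, fun hg => ?_⟩
  simp only [posElt_genInv_iff, negElt_genInv_iff, isMaxDeltaPow_genInv_iff,
    isMaxNegDeltaPow_genInv_iff] at hg ⊢
  rcases hsign hg.symm with h₁ | h₂ | hpos | hneg
  exacts [.inl h₁.genInv, .inr (.inl h₂.genInv), .inr (.inr (.inr hpos)),
    .inr (.inr (.inl hneg))]

end GeneratorInversion

section DeltaFree

variable {m : ℕ} {g : DA m}

/-- An element of `DA(m)` none of whose geodesic factorisations splits off a nontrivial power of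
`Δ`, of either sign. -/
def DeltaFree (g : DA m) : Prop := ∀ d : ℤ, IsLeftDiv (ℓD m) (Delta m ^ d) g → d = 0

lemma isLeftDiv_of_add_le {h q : DA m} (hq : h * q = g) (hle : ℓD m h + ℓD m q ≤ ℓD m g) :
    IsLeftDiv (ℓD m) h g := by
  subst hq
  rw [IsLeftDiv, inv_mul_cancel_left]
  exact hle.antisymm (ℓD_mul_le h q)

lemma DeltaFree.eq_zero_of_mul (hg : DeltaFree g) {p q : DA m} {d : ℤ}
    (hprod : p * Delta m ^ d * q = g) (hlen : ℓD m p + ℓD m (Delta m ^ d) + ℓD m q ≤ ℓD m g) :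
    d = 0 := by
  have hconj := ℓD_Delta_zpow_conj (-d) p
  have hmul := ℓD_mul_le (Delta m ^ (-d) * p * (Delta m ^ (-d))⁻¹) q
  refine hg d (isLeftDiv_of_add_le (q := Delta m ^ (-d) * p * (Delta m ^ (-d))⁻¹ * q) ?_ ?_)
  · rw [← hprod]
    group
  · omega

lemma DeltaFree.eq_one_of_mul_eq_Delta_zpow (hg : DeltaFree g) {p a b q : DA m} {d : ℤ}
    (hprod : p * a * b * q = g) (hlen : ℓD m p + ℓD m a + ℓD m b + ℓD m q ≤ ℓD m g)
    (hab : a * b = Delta m ^ d) : a = 1 := by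
  have hle := ℓD_mul_le a b
  have hd : d = 0 := by
    refine hg.eq_zero_of_mul (p := p) (q := q) (by rw [← hab, ← hprod, ← mul_assoc p]) ?_
    rw [← hab]
    omega
  rw [hd, zpow_zero] at hab
  have hpq := ℓD_mul_le p q
  rw [mul_assoc p, hab, mul_one] at hprod
  rw [hprod] at hpq
  exact eq_one_of_ℓD_eq_zero (by omega)

lemma ℓD_Delta_mul_atom_inv_lt [NeZero m] (x : ZMod 2) : ℓD m (Delta m * (atom m x)⁻¹) < m := by
  obtain ⟨n, rfl⟩ := Nat.exists_eq_succ_of_ne_zero (NeZero.ne m)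
  have hx : x + n + n = x := by rw [add_assoc, CharTwo.add_self_eq_zero, add_zero]
  rw [← alt_atom_eq_Delta (x + n), alt_succ', hx, mul_inv_cancel_right]
  exact Nat.lt_succ_of_le (ℓD_alt_le n _)

lemma ℓD_Delta_mul_lt [NeZero m] (hg : ¬ posElt m g) : ℓD m (Delta m * g) < m + ℓD m g := by
  obtain ⟨p, x, q, rfl, hlen⟩ := exists_atom_inv_of_not_posElt hg
  have hsplit : Delta m * (p * (atom m x)⁻¹ * q) =
      Delta m ^ (1 : ℤ) * p * (Delta m ^ (1 : ℤ))⁻¹ * (Delta m * (atom m x)⁻¹) * q := by group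
  have hconj := ℓD_Delta_zpow_conj 1 p
  have hshort := ℓD_Delta_mul_atom_inv_lt (m := m) x
  have hmul₁ := ℓD_mul_le (Delta m ^ (1 : ℤ) * p * (Delta m ^ (1 : ℤ))⁻¹)
    (Delta m * (atom m x)⁻¹)
  have hmul₂ := ℓD_mul_le (Delta m ^ (1 : ℤ) * p * (Delta m ^ (1 : ℤ))⁻¹ *
    (Delta m * (atom m x)⁻¹)) q
  rw [hsplit]
  omega

lemma posElt_of_isLeftDiv_Delta_pow [NeZero m] {d : ℕ} (hd : d ≠ 0)
    (h : IsLeftDiv (ℓD m) (Delta m ^ d) g) : posElt m g := by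
  obtain ⟨n, rfl⟩ := Nat.exists_eq_add_one_of_ne_zero hd
  suffices posElt m ((Delta m ^ (n + 1))⁻¹ * g) by
    exact mul_inv_cancel_left (Delta m ^ (n + 1)) g ▸
      Submonoid.mul_mem _ (posElt_Delta_pow (n + 1)) this
  by_contra hneg
  have hshort := ℓD_Delta_mul_lt hneg
  have hmul := ℓD_mul_le (Delta m ^ n) (Delta m * ((Delta m ^ (n + 1))⁻¹ * g))
  rw [← mul_assoc, ← pow_succ, mul_inv_cancel_left, ℓD_Delta_pow] at hmul
  rw [IsLeftDiv, ℓD_Delta_pow, add_one_mul] at h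
  omega

lemma deltaFree_of_not_signed [NeZero m] (hg : ¬ (posElt m g ∨ negElt m g)) : DeltaFree g := by
  intro d hd
  by_contra hd₀
  obtain ⟨n, rfl | rfl⟩ := d.eq_nat_or_neg
  · rw [zpow_natCast] at hd
    exact hg (.inl (posElt_of_isLeftDiv_Delta_pow (by simpa using hd₀) hd))
  · rw [← isLeftDiv_genInv_iff, map_zpow, genInv_Delta, inv_zpow, zpow_neg, inv_inv,
      zpow_natCast] at hd
    exact hg (.inr (posElt_genInv_iff.1 (posElt_of_isLeftDiv_Delta_pow (by simpa using hd₀) hd)))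

lemma IsMaxDeltaPow.posElt_inv_mul {d : ℕ} (hd : IsMaxDeltaPow m d g) (hg : posElt m g) :
    posElt m ((Delta m ^ d)⁻¹ * g) :=
  (posElt_of_mul (by rwa [mul_inv_cancel_left]) (by rw [mul_inv_cancel_left]; exact hd.1)).2

lemma IsMaxDeltaPow.deltaFree_inv_mul [NeZero m] {d : ℕ} (hd : IsMaxDeltaPow m d g)
    (hg : posElt m g) : DeltaFree ((Delta m ^ d)⁻¹ * g) := by
  intro e he
  have hpos : posElt m (Delta m ^ e) :=
    (posElt_of_mul (by rw [mul_inv_cancel_left]; exact hd.posElt_inv_mul hg)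
      (by rw [mul_inv_cancel_left]; exact he)).1
  obtain ⟨n, rfl⟩ : ∃ n : ℕ, e = n := by
    rw [posElt_iff_deg_eq, deg_zpow, deg_Delta, ℓD_Delta_zpow, Nat.cast_mul] at hpos
    have hm : (m : ℤ) ≠ 0 := Nat.cast_ne_zero.2 (NeZero.ne m)
    exact ⟨e.natAbs, mul_right_cancel₀ hm hpos⟩
  have hdvd : IsLeftDiv (ℓD m) (Delta m ^ (d + n)) g := by
    have hd' : d * m + ℓD m ((Delta m ^ d)⁻¹ * g) = ℓD m g := by
      rw [← ℓD_Delta_pow]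
      exact hd.1
    rw [IsLeftDiv, zpow_natCast, ← mul_assoc, ← mul_inv_rev, ← pow_add, ℓD_Delta_pow] at he
    rw [IsLeftDiv, ℓD_Delta_pow, add_mul]
    omega
  have := hd.2 _ hdvd
  omega

end DeltaFree

section Cactus

/-- The vertices of the infinite cactus of `m`-gons in which every vertex lies on exactly two
tiles; they index the cosets `gΔ^ℤ` of `DA(m)`. A vertex is described by how it is reached from
the root tile: either it lies on it, or it lies at a position `z ≠ 0` of the tile hanging at
another vertex `v`, position `0` being `v` itself. -/
inductive Vertex (m : ℕ) : Type
  | root (z : ZMod m) : Vertex m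
  | attach (v : Vertex m) (z : ZMod m) (hz : z ≠ 0) : Vertex m

/-- The tiles (`m`-gons) of the cactus: `none` is the root tile, and `some v` is the tile hanging at
the vertex `v`. -/
abbrev Tile (m : ℕ) : Type := Option (Vertex m)

/-- Elements of `DA(m)` in coordinates: a coset `gΔ^ℤ` together with a power of `Δ`. -/
abbrev State (m : ℕ) : Type := Vertex m × ℤ

variable {m : ℕ}

/-- The tile through which a vertex is reached from the root, and the position on it. -/
def Vertex.parent : Vertex m → Tile m × ZMod m
  | root z => (none, z)
  | attach v z _ => (some v, z)

/-- The index of the generator labelling the edge that leaves a vertex along its parent tile.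
The edge leaving it along the tile hanging at it has the other label. -/
def Vertex.parentLabel : Vertex m → ZMod 2
  | root z => z.val
  | attach v z _ => v.parentLabel + 1 + z.val

/-- The index of the generator labelling the edge of a tile that leaves position `0`. -/
def Tile.baseLabel : Tile m → ZMod 2
  | none => 0
  | some v => v.parentLabel + 1

/-- The vertex at a given position of a tile. -/
def Tile.vertexAt : Tile m → ZMod m → Vertex m
  | none, z => .root z
  | some v, z => if hz : z = 0 then v else .attach v z hz

/-- The preimage of a tile in the Cayley graph is a line, unwrapped `m` steps per power of `Δ`;
this is its state number `J`. -/
def Tile.stateAt (Q : Tile m) (J : ℤ) : State m := (Q.vertexAt J, J / m)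

/-- The index of the generator labelling the edge that leaves a state along the line above the
parent tile of its vertex. -/
def State.label (s : State m) : ZMod 2 := s.1.parentLabel + m * s.2

/-- The line through a state whose outgoing edge is labelled by the generator `x`, and the number
of the state on that line. -/
def State.line (x : ZMod 2) (s : State m) : Tile m × ℤ :=
  if s.label = x then (s.1.parent.1, s.1.parent.2.val + m * s.2) else (some s.1, m * s.2)

lemma Vertex.vertexAt_parent (v : Vertex m) : v.parent.1.vertexAt v.parent.2 = v := by
  cases v with
  | root z => rfl
  | attach v z hz => exact dif_neg hz

lemma Tile.parent_vertexAt_or (Q : Tile m) (z : ZMod m) :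
    (Q.vertexAt z).parent = (Q, z) ∨ ∃ v, Q = some v ∧ z = 0 := by
  cases Q with
  | none => exact .inl rfl
  | some v =>
    by_cases hz : z = 0
    · exact .inr ⟨v, rfl, hz⟩
    · exact .inl (by rw [Tile.vertexAt, dif_neg hz, Vertex.parent])

lemma Vertex.baseLabel_parent (v : Vertex m) :
    v.parent.1.baseLabel + v.parent.2.val = v.parentLabel := by
  cases v with
  | root z => exact zero_add _
  | attach v z hz => rfl

lemma State.baseLabel_line (x : ZMod 2) (s : State m) :
    (s.line x).1.baseLabel + ((s.line x).2 : ZMod 2) = x := by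
  rw [State.line]
  split_ifs with hx
  · rw [← hx, State.label, ← Vertex.baseLabel_parent]
    push_cast
    ring
  · rw [← add_one_eq_of_ne hx, State.label, Tile.baseLabel]
    push_cast
    ring

section NeZero

variable [NeZero m]

lemma val_add_mul_ediv (J : ℤ) : ((J : ZMod m).val + m * (J / m) : ℤ) = J := by
  rw [ZMod.val_intCast, Int.emod_add_mul_ediv]

lemma Tile.stateAt_add_mul (Q : Tile m) (J c : ℤ) :
    Q.stateAt (J + m * c) = ((Q.stateAt J).1, (Q.stateAt J).2 + c) := by
  have hm : (m : ℤ) ≠ 0 := Nat.cast_ne_zero.2 (NeZero.ne m)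
  simp [Tile.stateAt, Int.add_mul_ediv_left _ _ hm]

lemma Tile.stateAt_val_add_mul (Q : Tile m) (z : ZMod m) (c : ℤ) :
    Q.stateAt (z.val + m * c) = (Q.vertexAt z, c) := by
  rw [Tile.stateAt_add_mul, Tile.stateAt, Int.cast_natCast, ZMod.natCast_zmod_val,
    Int.ediv_eq_zero_of_lt (by positivity) (by exact_mod_cast z.val_lt), zero_add]

lemma State.stateAt_line (x : ZMod 2) (s : State m) :
    (s.line x).1.stateAt (s.line x).2 = s := by
  rw [State.line]
  split_ifs with hx
  · rw [Tile.stateAt_val_add_mul, Vertex.vertexAt_parent]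
  · simpa [Tile.vertexAt] using Tile.stateAt_val_add_mul (some s.1) 0 s.2

lemma Tile.label_stateAt {Q : Tile m} {J : ℤ} (hJ : (Q.vertexAt J).parent = (Q, (J : ZMod m))) :
    (Q.stateAt J).label = Q.baseLabel + J := by
  have hcast := congrArg (Int.cast : ℤ → ZMod 2) (val_add_mul_ediv (m := m) J)
  push_cast at hcast
  rw [State.label, Tile.stateAt, ← Vertex.baseLabel_parent, hJ, add_assoc, hcast]

lemma Tile.line_stateAt (Q : Tile m) (J : ℤ) :
    (Q.stateAt J).line (Q.baseLabel + J) = (Q, J) := by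
  have hval := val_add_mul_ediv (m := m) J
  rcases Q.parent_vertexAt_or J with hJ | ⟨v, rfl, hJ⟩
  · rw [State.line, if_pos (Tile.label_stateAt hJ), Tile.stateAt, hJ, hval]
  · obtain ⟨c, rfl⟩ : (m : ℤ) ∣ J := (ZMod.intCast_zmod_eq_zero_iff_dvd J m).1 hJ
    have hstate : Tile.stateAt (some v) (m * c) = (v, c) := by
      simpa [Tile.vertexAt] using Tile.stateAt_val_add_mul (some v) 0 c
    have hlabel : State.label (v, c) ≠ Tile.baseLabel (some v) + ((m * c : ℤ) : ZMod 2) := by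
      rw [State.label, Tile.baseLabel]
      push_cast
      rw [add_right_comm]
      exact (add_one_ne _).symm
    rw [hstate, State.line, if_neg hlabel]

end NeZero

end Cactus

section Action

variable {m : ℕ} [NeZero m]

lemma State.exists_line (x : ZMod 2) (s : State m) :
    ∃ (Q : Tile m) (J : ℤ), Q.stateAt J = s ∧ Q.baseLabel + (J : ZMod 2) = x :=
  ⟨_, _, s.stateAt_line x, s.baseLabel_line x⟩

lemma Tile.line_stateAt_of_eq {Q : Tile m} {J : ℤ} {x : ZMod 2}
    (hx : Q.baseLabel + (J : ZMod 2) = x) : (Q.stateAt J).line x = (Q, J) :=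
  hx ▸ Q.line_stateAt J

/-- Right multiplication by a generator, in coordinates: one step along the line whose next edge
carries its label. -/
def State.step (x : ZMod 2) : Equiv.Perm (State m) where
  toFun s := (s.line x).1.stateAt ((s.line x).2 + 1)
  invFun s := (s.line (x + 1)).1.stateAt ((s.line (x + 1)).2 - 1)
  left_inv s := by
    obtain ⟨Q, J, rfl, rfl⟩ := s.exists_line x
    have hnext : (Q.stateAt (J + 1)).line (Q.baseLabel + J + 1) = (Q, J + 1) :=
      Tile.line_stateAt_of_eq (by push_cast; ring)
    simp only [Q.line_stateAt, hnext, add_sub_cancel_right]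
  right_inv s := by
    obtain ⟨Q, J, rfl, hx⟩ := s.exists_line (x + 1)
    have hprev : (Q.stateAt (J - 1)).line x = (Q, J - 1) :=
      Tile.line_stateAt_of_eq (by push_cast; linear_combination hx)
    simp only [Tile.line_stateAt_of_eq hx, hprev, sub_add_cancel]

lemma Tile.step_stateAt {Q : Tile m} {J : ℤ} {x : ZMod 2}
    (hx : Q.baseLabel + (J : ZMod 2) = x) : State.step x (Q.stateAt J) = Q.stateAt (J + 1) := by
  rw [State.step, Equiv.coe_fn_mk, Tile.line_stateAt_of_eq hx]

lemma Tile.step_symm_stateAt {Q : Tile m} {J : ℤ} {x : ZMod 2}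
    (hx : Q.baseLabel + (J : ZMod 2) = x) :
    (State.step x).symm (Q.stateAt (J + 1)) = Q.stateAt J := by
  rw [Equiv.symm_apply_eq, Tile.step_stateAt hx]

lemma Tile.alt_step_stateAt (n : ℕ) {Q : Tile m} {J : ℤ} {x : ZMod 2}
    (hx : Q.baseLabel + (J : ZMod 2) = x) :
    (alt (fun y => MulOpposite.op (State.step y)) n x).unop (Q.stateAt J) = Q.stateAt (J + n) := by
  induction n generalizing J x with
  | zero => simp [alt_zero]
  | succ n ih =>
    rw [alt_succ, MulOpposite.unop_mul, Equiv.Perm.mul_apply, MulOpposite.unop_op,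
      Tile.step_stateAt hx, ih (by rw [← hx]; push_cast; ring)]
    congr 1
    push_cast
    ring

lemma State.alt_step (x : ZMod 2) (s : State m) :
    (alt (fun y => MulOpposite.op (State.step y)) m x).unop s = (s.1, s.2 + 1) := by
  obtain ⟨Q, J, rfl, hx⟩ := s.exists_line x
  simpa [Tile.alt_step_stateAt m hx] using Q.stateAt_add_mul J 1

/-- The right action of `DA(m)` on coordinates. -/
def action (m : ℕ) [NeZero m] : DA m →* (Equiv.Perm (State m))ᵐᵒᵖ :=
  DA.lift (fun x => MulOpposite.op (State.step x)) <| MulOpposite.unop_injective <|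
    Equiv.ext fun s => (s.alt_step 0).trans (s.alt_step 1).symm

/-- The state reached from `s` by reading `g`. -/
def State.act (s : State m) (g : DA m) : State m := (action m g).unop s

lemma State.act_one (s : State m) : s.act 1 = s := by simp [State.act]

lemma State.act_mul (s : State m) (g h : DA m) : s.act (g * h) = (s.act g).act h := by
  simp [State.act]

lemma State.act_atom (s : State m) (x : ZMod 2) : s.act (atom m x) = State.step x s := by
  rw [State.act, action, DA.lift_atom, MulOpposite.unop_op]

lemma State.act_atom_inv (s : State m) (x : ZMod 2) :
    s.act (atom m x)⁻¹ = (State.step x).symm s := by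
  rw [Equiv.eq_symm_apply, ← State.act_atom, ← State.act_mul, inv_mul_cancel, State.act_one]

lemma State.act_Delta_pow (s : State m) (n : ℕ) : s.act (Delta m ^ n) = (s.1, s.2 + n) := by
  induction n with
  | zero => simp [State.act_one]
  | succ n ih =>
    have hDelta (t : State m) : t.act (Delta m) = (t.1, t.2 + 1) := by
      have hcomp : action m ∘ atom m = fun x => MulOpposite.op (State.step x) :=
        funext fun x => DA.lift_atom _ _ x
      rw [State.act, ← alt_atom_eq_Delta 0, map_alt, hcomp, t.alt_step]
    rw [pow_succ, State.act_mul, ih, hDelta]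
    push_cast
    rw [add_assoc]

lemma State.exists_line_act (s : State m) {a : DA m} (ha : a ∈ genSet 2 (DMat m)) :
    ∃ (Q : Tile m) (J J' : ℤ), Q.stateAt J = s ∧ Q.stateAt J' = s.act a := by
  obtain ⟨x, rfl | rfl⟩ := mem_genSet_DMat.1 ha
  · obtain ⟨Q, J, rfl, hx⟩ := s.exists_line x
    exact ⟨Q, J, J + 1, rfl, by rw [State.act_atom, Tile.step_stateAt hx]⟩
  · obtain ⟨Q, J, rfl, hx⟩ := s.exists_line (x + 1)
    refine ⟨Q, J, J - 1, rfl, ?_⟩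
    have hprev : Q.baseLabel + ((J - 1 : ℤ) : ZMod 2) = x := by
      push_cast
      linear_combination hx
    rw [State.act_atom_inv, ← Tile.step_symm_stateAt hprev, sub_add_cancel]

end Action

section NormalForm

variable {m : ℕ}

/-- A representative of the coset of `Δ^ℤ` that a vertex indexes: follow the tiles leading to it
from the root, each in the positive direction. -/
def Vertex.elt : Vertex m → DA m
  | root z => alt (atom m) z.val 0
  | attach v z _ => v.elt * alt (atom m) z.val (v.parentLabel + 1)

/-- The representative of position `0` of a tile. -/
def Tile.elt : Tile m → DA m
  | none => 1
  | some v => v.elt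

/-- The element of `DA(m)` with given coordinates. -/
def State.elt (s : State m) : DA m := s.1.elt * Delta m ^ s.2

lemma Tile.elt_vertexAt (Q : Tile m) (z : ZMod m) :
    (Q.vertexAt z).elt = Q.elt * alt (atom m) z.val Q.baseLabel := by
  cases Q with
  | none => exact (one_mul _).symm
  | some v =>
    by_cases hz : z = 0
    · simp [Tile.vertexAt, hz, Tile.elt, alt_zero]
    · rw [Tile.vertexAt, dif_neg hz]
      rfl

variable [NeZero m]

lemma Tile.elt_stateAt (Q : Tile m) {n : ℕ} (hn : n ≤ m) (c : ℤ) :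
    (Q.stateAt (n + m * c)).elt = Q.elt * alt (atom m) n Q.baseLabel * Delta m ^ c := by
  rcases hn.lt_or_eq with hlt | rfl
  · have hstate : Q.stateAt (n + m * c) = (Q.vertexAt n, c) := by
      rw [← Tile.stateAt_val_add_mul, ZMod.val_natCast_of_lt hlt]
    rw [hstate, State.elt, Tile.elt_vertexAt, ZMod.val_natCast_of_lt hlt]
  · have hstate : Q.stateAt (n + n * c) = (Q.vertexAt 0, c + 1) := by
      rw [← Tile.stateAt_val_add_mul, ZMod.val_zero]
      congr 1
      push_cast
      ring
    rw [hstate, State.elt, Tile.elt_vertexAt, ZMod.val_zero, alt_zero, mul_one, alt_atom_eq_Delta,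
      mul_assoc, ← zpow_one_add, add_comm]

lemma Tile.elt_stateAt_add_one (Q : Tile m) (J : ℤ) :
    (Q.stateAt (J + 1)).elt = (Q.stateAt J).elt * atom m (Q.baseLabel + J) := by
  obtain ⟨z, c, hJ⟩ : ∃ (z : ZMod m) (c : ℤ), J = z.val + m * c :=
    ⟨_, _, (val_add_mul_ediv J).symm⟩
  have hJ₁ : J + 1 = ((z.val + 1 : ℕ) : ℤ) + m * c := by rw [hJ]; push_cast; ring
  have hlabel : Q.baseLabel + (J : ZMod 2) + m * c = Q.baseLabel + z.val := by
    rw [hJ]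
    push_cast
    linear_combination (m * c : ZMod 2) * CharTwo.two_eq_zero (R := ZMod 2)
  rw [hJ₁, Tile.elt_stateAt Q z.val_lt, alt_succ', ← hlabel, mul_assoc _ (alt _ _ _ * _),
    mul_assoc (alt _ _ _), ← Delta_zpow_mul_atom, ← mul_assoc, ← mul_assoc,
    ← Tile.elt_stateAt Q z.val_lt.le, ← hJ]

lemma State.elt_act (s : State m) (g : DA m) : (s.act g).elt = s.elt * g := by
  have hg : g ∈ Submonoid.closure (genSet 2 (DMat m)) := by
    rw [closure_genSet]
    exact Submonoid.mem_top g
  have hatom (s : State m) (x : ZMod 2) : (State.step x s).elt = s.elt * atom m x := by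
    obtain ⟨Q, J, rfl, rfl⟩ := s.exists_line x
    rw [Tile.step_stateAt rfl, Tile.elt_stateAt_add_one]
  induction hg using Submonoid.closure_induction generalizing s with
  | mem a ha =>
    obtain ⟨x, rfl | rfl⟩ := mem_genSet_DMat.1 ha
    · rw [State.act_atom, hatom]
    · rw [State.act_atom_inv, eq_mul_inv_iff_mul_eq, ← hatom, Equiv.apply_symm_apply]
  | one => rw [State.act_one, mul_one]
  | mul g h _ _ hg hh => rw [State.act_mul, hh, hg, mul_assoc]

/-- The vertex of the cactus indexing the coset `gΔ^ℤ`. -/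
def vert (g : DA m) : Vertex m := (State.act (.root 0, 0) g).1

lemma exists_eq_elt_vert_mul (g : DA m) : ∃ c : ℤ, (vert g).elt * Delta m ^ c = g := by
  have h := State.elt_act (.root 0, 0) g
  simp only [State.elt, Vertex.elt, ZMod.val_zero, alt_zero, zpow_zero, one_mul] at h
  exact ⟨_, h⟩

lemma exists_eq_mul_Delta_zpow_of_vert_eq {g h : DA m} (hgh : vert g = vert h) :
    ∃ d : ℤ, h = g * Delta m ^ d := by
  obtain ⟨b, hb⟩ := exists_eq_elt_vert_mul g
  obtain ⟨c, hc⟩ := exists_eq_elt_vert_mul h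
  exact ⟨c - b, by rw [← hc, ← hb, hgh, mul_assoc, ← zpow_add, add_sub_cancel]⟩

lemma eq_of_vert_eq_of_deg_eq {g h : DA m} (hvert : vert g = vert h) (hdeg : deg g = deg h) :
    g = h := by
  obtain ⟨d, rfl⟩ := exists_eq_mul_Delta_zpow_of_vert_eq hvert
  have hd : d = 0 := by simpa [deg_mul, deg_zpow, deg_Delta, NeZero.ne m] using hdeg
  rw [hd, zpow_zero, mul_one]

lemma vert_mul_Delta_pow (g : DA m) (n : ℕ) : vert (g * Delta m ^ n) = vert g := by
  rw [vert, State.act_mul, State.act_Delta_pow, vert]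

end NormalForm

section Depth

variable {m : ℕ}

/-- The number of tiles other than the root tile through which a vertex is reached. -/
def Vertex.depth : Vertex m → ℕ
  | root _ => 0
  | attach v _ _ => v.depth + 1

lemma Tile.depth_vertexAt_le (Q : Tile m) (z z' : ZMod m) :
    (Q.vertexAt z').depth ≤ (Q.vertexAt z).depth + 1 := by
  cases Q with
  | none => exact Nat.zero_le _
  | some v =>
    rw [Tile.vertexAt, Tile.vertexAt]
    split_ifs <;> simp [Vertex.depth, add_assoc]

lemma Tile.parent_vertexAt_some (v : Vertex m) {z : ZMod m} (hz : z ≠ 0) :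
    (Tile.vertexAt (some v) z).parent = (some v, z) := by
  rw [Tile.vertexAt, dif_neg hz, Vertex.parent]

lemma Tile.depth_vertexAt_some (v : Vertex m) {z : ZMod m} (hz : z ≠ 0) :
    (Tile.vertexAt (some v) z).depth = v.depth + 1 := by
  rw [Tile.vertexAt, dif_neg hz, Vertex.depth]

variable [NeZero m]

lemma State.depth_act_le (s : State m) (g : DA m) :
    (s.act g).1.depth ≤ s.1.depth + ℓD m g := by
  have hstep (g a : DA m) (ha : a ∈ genSet 2 (DMat m)) :
      (s.act (g * a)).1.depth ≤ (s.act g).1.depth + 1 := by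
    obtain ⟨Q, J, J', hJ, hJ'⟩ := (s.act g).exists_line_act ha
    rw [State.act_mul, ← hJ', ← hJ]
    exact Q.depth_vertexAt_le _ _
  have hle := le_add_wordLength (closure_genSet 2 (DMat m)) (f := fun g => (s.act g).1.depth)
    hstep 1 g
  rwa [one_mul, State.act_one] at hle

lemma State.line_of_label_ne {s : State m} {x : ZMod 2} (hx : s.label ≠ x) :
    Tile.stateAt (some s.1) (m * s.2) = s ∧
      Tile.baseLabel (some s.1) + ((m * s.2 : ℤ) : ZMod 2) = x := by
  have hline : s.line x = (some s.1, m * s.2) := if_neg hx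
  exact ⟨by simpa only [hline] using s.stateAt_line x,
    by simpa only [hline] using s.baseLabel_line x⟩

lemma State.act_atom_of_label_ne (hm : 2 ≤ m) {s : State m} {x : ZMod 2} (hx : s.label ≠ x) :
    (s.act (atom m x)).1.depth = s.1.depth + 1 ∧ (s.act (atom m x)).label ≠ x := by
  obtain ⟨hs, hbase⟩ := State.line_of_label_ne hx
  have : Fact (1 < m) := ⟨hm⟩
  have hz : ((m * s.2 + 1 : ℤ) : ZMod m) ≠ 0 := by simp
  have hact : s.act (atom m x) = Tile.stateAt (some s.1) (m * s.2 + 1) := by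
    rw [State.act_atom, ← Tile.step_stateAt hbase, hs]
  rw [hact, Tile.label_stateAt (Tile.parent_vertexAt_some s.1 hz), Int.cast_add, ← add_assoc, hbase,
    Int.cast_one]
  exact ⟨Tile.depth_vertexAt_some s.1 hz, add_one_ne x⟩

lemma State.act_atom_inv_of_label_eq (hm : 2 ≤ m) {s : State m} {x : ZMod 2} (hx : s.label = x) :
    (s.act (atom m x)⁻¹).1.depth = s.1.depth + 1 ∧ (s.act (atom m x)⁻¹).label = x := by
  obtain ⟨hs, hbase⟩ := State.line_of_label_ne (hx ▸ (add_one_ne x).symm : s.label ≠ x + 1)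
  have : Fact (1 < m) := ⟨hm⟩
  have hz : ((m * s.2 - 1 : ℤ) : ZMod m) ≠ 0 := by simp
  have hprev : Tile.baseLabel (some s.1) + ((m * s.2 - 1 : ℤ) : ZMod 2) = x := by
    rw [Int.cast_sub, ← add_sub_assoc, hbase, Int.cast_one, add_sub_cancel_right]
  have hact : s.act (atom m x)⁻¹ = Tile.stateAt (some s.1) (m * s.2 - 1) := by
    rw [State.act_atom_inv, ← Tile.step_symm_stateAt hprev, sub_add_cancel, hs]
  rw [hact, Tile.label_stateAt (Tile.parent_vertexAt_some s.1 hz)]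
  exact ⟨Tile.depth_vertexAt_some s.1 hz, hprev⟩

lemma State.act_pow_of_depth_succ {A : State m → Prop} {a : DA m}
    (ha : ∀ s, A s → (s.act a).1.depth = s.1.depth + 1 ∧ A (s.act a)) {s : State m} (hs : A s)
    (n : ℕ) : (s.act (a ^ n)).1.depth = s.1.depth + n ∧ A (s.act (a ^ n)) := by
  induction n with
  | zero => simpa [State.act_one] using hs
  | succ n ih =>
    obtain ⟨hdepth, hA⟩ := ha _ ih.2
    rw [pow_succ, State.act_mul, hdepth, ih.1, add_assoc]
    exact ⟨rfl, hA⟩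

end Depth

section Syllables

variable {m : ℕ}

lemma add_le_ℓD_pow_mul_inv_pow (hm : 2 ≤ m) (x : ZMod 2) (i j : ℕ) :
    i + j ≤ ℓD m (atom m x ^ i * (atom m (x + 1))⁻¹ ^ j) := by
  have : NeZero m := ⟨by omega⟩
  let s : State m := (.root ((x + 1).val : ℕ), 0)
  have hs : s.label ≠ x := by
    have hval : ((x + 1).val : ZMod m).val = (x + 1).val :=
      ZMod.val_natCast_of_lt ((ZMod.val_lt _).trans_le hm)
    simpa only [s, State.label, Vertex.parentLabel, hval, ZMod.natCast_zmod_val, Int.cast_zero,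
      mul_zero, add_zero] using add_one_ne x
  obtain ⟨hi, hlabel⟩ := State.act_pow_of_depth_succ (A := fun s => s.label ≠ x)
    (fun _ => State.act_atom_of_label_ne hm) hs i
  obtain ⟨hj, -⟩ := State.act_pow_of_depth_succ (A := fun s => s.label = x + 1)
    (fun _ => State.act_atom_inv_of_label_eq hm) (add_one_eq_of_ne hlabel.symm).symm j
  have hle := s.depth_act_le (atom m x ^ i * (atom m (x + 1))⁻¹ ^ j)
  have hdepth : s.1.depth = 0 := rfl
  rw [State.act_mul] at hle
  omega

lemma ℓD_zpow_mul_zpow (hm : 2 ≤ m) (x : ZMod 2) (i j : ℤ) :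
    ℓD m (atom m x ^ i * atom m (x + 1) ^ j) = i.natAbs + j.natAbs := by
  have hpow (x : ZMod 2) (n : ℤ) : ℓD m (atom m x ^ n) ≤ n.natAbs :=
    (ℓD_zpow_le _ n).trans (mul_le_of_le_one_right' (ℓD_atom_le x))
  refine ((ℓD_mul_le _ _).trans (add_le_add (hpow x i) (hpow (x + 1) j))).antisymm ?_
  have hdeg := natAbs_deg_le (atom m x ^ i * atom m (x + 1) ^ j)
  rw [deg_mul, deg_zpow, deg_zpow, deg_atom, deg_atom] at hdeg
  obtain ⟨k, rfl | rfl⟩ := i.eq_nat_or_neg <;> obtain ⟨l, rfl | rfl⟩ := j.eq_nat_or_neg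
  · omega
  · simpa using add_le_ℓD_pow_mul_inv_pow hm x k l
  · rw [← ℓD_genInv]
    simpa [genInv_atom] using add_le_ℓD_pow_mul_inv_pow hm x k l
  · omega

end Syllables

section Chain

variable {m : ℕ}

/-- A strict ancestor of `u`: one of the vertices at which the tiles that lead from the root tile
to `u` hang. It separates `u` from the root tile. -/
def Vertex.IsAncestor (p : Vertex m) : Vertex m → Prop
  | root _ => False
  | attach v _ _ => p = v ∨ p.IsAncestor v

/-- The vertices on the chain of tiles that leads from the root tile to `u`. The attaching vertex
of a tile is counted on its parent tile only. -/
def Vertex.chain (u : Vertex m) : Set (Vertex m) := {v | ∀ p ∈ v.parent.1, p.IsAncestor u}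

lemma Vertex.IsAncestor.depth_lt {p u : Vertex m} (hp : p.IsAncestor u) : p.depth < u.depth := by
  induction u with
  | root z => exact hp.elim
  | attach v z hz ih =>
    rw [Vertex.depth, Nat.lt_succ_iff]
    exact hp.elim (fun h => h ▸ le_rfl) fun h => (ih h).le

lemma Vertex.IsAncestor.eq_of_depth_eq {p p' u : Vertex m} (hp : p.IsAncestor u)
    (hp' : p'.IsAncestor u) (hdepth : p.depth = p'.depth) : p = p' := by
  induction u with
  | root z => exact hp.elim
  | attach v z hz ih =>
    rcases hp with rfl | hp <;> rcases hp' with rfl | hp'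
    · rfl
    · exact absurd hp'.depth_lt hdepth.not_gt
    · exact absurd hp.depth_lt hdepth.not_lt
    · exact ih hp hp'

lemma Tile.vertexAt_eq_of_isAncestor {Q : Tile m} {z z' : ZMod m} {p : Vertex m}
    (hz : p.IsAncestor (Q.vertexAt z)) (hz' : ¬ p.IsAncestor (Q.vertexAt z')) :
    Q.vertexAt z' = p := by
  cases Q with
  | none => exact hz.elim
  | some v =>
    rw [Tile.vertexAt] at hz hz' ⊢
    split_ifs at hz hz' ⊢ <;> simp_all [Vertex.IsAncestor]

lemma Vertex.injOn_chain (u : Vertex m) :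
    Set.InjOn (fun v : Vertex m => (v.depth, v.parent.2)) u.chain := by
  rintro (z | ⟨v, z, hz⟩) hv (z' | ⟨v', z', hz'⟩) hv' h
  · exact congrArg _ (Prod.ext_iff.1 h).2
  · exact absurd (Prod.ext_iff.1 h).1 (Nat.succ_ne_zero _).symm
  · exact absurd (Prod.ext_iff.1 h).1 (Nat.succ_ne_zero _)
  · obtain ⟨hdepth, rfl⟩ := Prod.ext_iff.1 h
    obtain rfl := (hv v rfl).eq_of_depth_eq (hv' v' rfl) (Nat.succ_injective hdepth)
    rfl

variable [NeZero m]

lemma vert_one : vert (1 : DA m) = .root 0 := by rw [vert, State.act_one]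

lemma vert_eq_of_isAncestor_mul {p : Vertex m} {g a : DA m} (ha : a ∈ genSet 2 (DMat m))
    (hg : p.IsAncestor (vert g)) (hga : ¬ p.IsAncestor (vert (g * a))) : vert (g * a) = p := by
  obtain ⟨Q, J, J', hJ, hJ'⟩ := ((State.act (.root 0, 0) g).exists_line_act ha)
  rw [vert, State.act_mul, ← hJ'] at hga ⊢
  rw [vert, ← hJ] at hg
  exact Tile.vertexAt_eq_of_isAncestor hg hga

lemma vert_eq_of_isAncestor_of_mul {p : Vertex m} {g a : DA m} (ha : a ∈ genSet 2 (DMat m))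
    (hg : ¬ p.IsAncestor (vert g)) (hga : p.IsAncestor (vert (g * a))) : vert g = p := by
  have h := vert_eq_of_isAncestor_mul (inv_mem_genSet ha) hga
  rw [mul_inv_cancel_right] at h
  exact h hg

lemma DeltaFree.isAncestor_vert {g h : DA m} (hg : DeltaFree g) (hh : IsLeftDiv (ℓD m) h g)
    {p : Vertex m} (hp : p.IsAncestor (vert h)) : p.IsAncestor (vert g) := by
  by_contra hpg
  obtain ⟨u, a, ha, v, huv, huvlen, hu, hua⟩ := exists_letter_of_not_mul
    (closure_genSet 2 (DMat m)) (A := fun g => ¬ p.IsAncestor (vert g)) (g := 1) (h := h)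
    (by rw [vert_one]; exact id) (by rwa [one_mul, not_not])
  rw [one_mul] at hu hua
  obtain ⟨u', b, hb, v', huv', huvlen', hu', hub'⟩ := exists_letter_of_not_mul
    (closure_genSet 2 (DMat m)) (A := fun g => p.IsAncestor (vert g)) (g := h) (h := h⁻¹ * g)
    hp (by rwa [mul_inv_cancel_left])
  have hin : vert u = p := vert_eq_of_isAncestor_of_mul ha hu (not_not.1 hua)
  have hout : vert (h * u' * b) = p := vert_eq_of_isAncestor_mul hb hu' hub'
  obtain ⟨d, hd⟩ := exists_eq_mul_Delta_zpow_of_vert_eq (hin.trans hout.symm)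
  have hloop : a * v * (u' * b) = Delta m ^ d := by
    rw [← inv_mul_eq_iff_eq_mul.2 hd, ← huv]
    group
  have hprod : u * (a * v) * (u' * b) * v' = g := by
    rw [← mul_assoc u, huv, mul_assoc, huv', mul_inv_cancel_left]
  have hlen : ℓD m u + ℓD m (a * v) + ℓD m (u' * b) + ℓD m v' ≤ ℓD m g := by
    have hav : ℓD m (a * v) ≤ 1 + ℓD m v :=
      (ℓD_mul_le a v).trans (Nat.add_le_add_right (wordLength_le_one ha) _)
    have hub : ℓD m (u' * b) ≤ ℓD m u' + 1 :=
      (ℓD_mul_le u' b).trans (Nat.add_le_add_left (wordLength_le_one hb) _)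
    change ℓD m u + 1 + ℓD m v ≤ ℓD m h at huvlen
    change ℓD m u' + 1 + ℓD m v' ≤ ℓD m (h⁻¹ * g) at huvlen'
    change ℓD m h + ℓD m (h⁻¹ * g) = ℓD m g at hh
    omega
  rw [mul_assoc, hg.eq_one_of_mul_eq_Delta_zpow hprod hlen hloop, mul_one] at huv
  exact hu (huv ▸ hp)

lemma DeltaFree.vert_mem_chain {g h : DA m} (hg : DeltaFree g) (hh : IsLeftDiv (ℓD m) h g) :
    vert h ∈ (vert g).chain := by
  intro p hp
  refine hg.isAncestor_vert hh ?_
  cases hv : vert h with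
  | root z => simp [hv, Vertex.parent] at hp
  | attach v z hz =>
    simp only [hv, Vertex.parent, Option.mem_some_iff] at hp
    exact .inl hp.symm

lemma DeltaFree.encard_vert_image_le {g : DA m} (hg : DeltaFree g) (k : ℕ) :
    (vert '' {h | IsLeftDiv (ℓD m) h g ∧ ℓD m h ≤ k}).encard ≤ ((k + 1) * m : ℕ) := by
  have hmaps : Set.MapsTo (fun v : Vertex m => (v.depth, v.parent.2))
      (vert '' {h | IsLeftDiv (ℓD m) h g ∧ ℓD m h ≤ k})
      (Finset.range (k + 1) ×ˢ (Finset.univ : Finset (ZMod m)) : Finset (ℕ × ZMod m)) := by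
    rintro _ ⟨h, ⟨-, hk⟩, rfl⟩
    have hdepth : (vert h).depth ≤ ℓD m h := by
      simpa [vert, Vertex.depth] using State.depth_act_le (.root 0, 0) h
    simp only [Finset.coe_product, Set.mem_prod, Finset.coe_range, Set.mem_Iio, Finset.coe_univ,
      Set.mem_univ, and_true]
    omega
  have hinj : Set.InjOn (fun v : Vertex m => (v.depth, v.parent.2))
      (vert '' {h | IsLeftDiv (ℓD m) h g ∧ ℓD m h ≤ k}) :=
    (vert g).injOn_chain.mono (Set.forall_mem_image.2 fun h hh => hg.vert_mem_chain hh.1)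
  refine (Set.encard_le_encard_of_injOn hmaps hinj).trans ?_
  rw [Set.encard_coe_eq_coe_finsetCard, Finset.card_product, Finset.card_range, Finset.card_univ,
    ZMod.card]

end Chain

section Counting

variable {m : ℕ}

lemma IsLeftDiv.deg_eq_of_posElt {g h : DA m} (hg : posElt m g) (hh : IsLeftDiv (ℓD m) h g) :
    deg h = ℓD m h :=
  posElt_iff_deg_eq.1
    (posElt_of_mul (by rwa [mul_inv_cancel_left]) (by rw [mul_inv_cancel_left]; exact hh)).1

lemma DeltaFree.encard_leftDiv_le [NeZero m] {g : DA m} (hg : DeltaFree g) (k : ℕ) :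
    {h | IsLeftDiv (ℓD m) h g ∧ ℓD m h ≤ k}.encard ≤ ((k + 1) * m * (2 * k + 1) : ℕ) := by
  set S := {h | IsLeftDiv (ℓD m) h g ∧ ℓD m h ≤ k}
  have hmaps : Set.MapsTo (fun h => (vert h, deg h)) S
      ((vert '' S) ×ˢ (Finset.Icc (-k : ℤ) k : Set ℤ)) := by
    intro h hh
    have hdeg := natAbs_deg_le h
    have hk : ℓD m h ≤ k := hh.2
    have hIcc : deg h ∈ Finset.Icc (-k : ℤ) k := Finset.mem_Icc.2 (by omega)
    exact ⟨Set.mem_image_of_mem _ hh, hIcc⟩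
  have hinj : Set.InjOn (fun h => (vert h, deg h)) S := fun h _ h' _ heq =>
    eq_of_vert_eq_of_deg_eq (Prod.ext_iff.1 heq).1 (Prod.ext_iff.1 heq).2
  have hcard : (Finset.Icc (-k : ℤ) k).card = 2 * k + 1 := by
    rw [Int.card_Icc]
    omega
  refine (Set.encard_le_encard_of_injOn hmaps hinj).trans ?_
  rw [Set.encard_prod, Set.encard_coe_eq_coe_finsetCard, hcard, Nat.cast_mul]
  exact mul_le_mul_left (hg.encard_vert_image_le k) _

lemma exists_pow_eq_atom_zpow {a : DA m} (ha : a ∈ lettersDA m) (s : ℕ) :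
    ∃ (x : ZMod 2) (i : ℤ), a ^ s = atom m x ^ i := by
  rw [lettersDA_eq_genSet] at ha
  obtain ⟨x, rfl | rfl⟩ := mem_genSet_DMat.1 ha
  · exact ⟨x, s, (zpow_natCast _ s).symm⟩
  · exact ⟨x, -s, by rw [zpow_neg, zpow_natCast, inv_pow]⟩

lemma TwoSyllable.exists_zpow {h : DA m} (hh : TwoSyllable m h) :
    ∃ (x : ZMod 2) (i j : ℤ), h = atom m x ^ i * atom m (x + 1) ^ j := by
  obtain ⟨a, ha, b, hb, s, t, rfl⟩ := hh
  obtain ⟨x, i, hi⟩ := exists_pow_eq_atom_zpow ha s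
  obtain ⟨y, j, hj⟩ := exists_pow_eq_atom_zpow hb t
  rw [hi, hj]
  by_cases hxy : x = y
  · exact ⟨x, i + j, 0, by rw [zpow_zero, mul_one, zpow_add, hxy]⟩
  · exact ⟨x, i, j, by rw [add_one_eq_of_ne hxy]⟩

lemma twoSyllable_one : TwoSyllable m 1 :=
  ⟨_, .inl rfl, _, .inl rfl, 0, 0, by simp⟩

lemma encard_twoSyllable_le (hm : 2 ≤ m) (k : ℕ) :
    {h : DA m | TwoSyllable m h ∧ ℓD m h ≤ k}.encard ≤ (2 * (2 * k + 1) ^ 2 : ℕ) := by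
  let f (p : ZMod 2 × ℤ × ℤ) : DA m := atom m p.1 ^ p.2.1 * atom m (p.1 + 1) ^ p.2.2
  let B : Finset (ZMod 2 × ℤ × ℤ) :=
    Finset.univ ×ˢ Finset.Icc (-k : ℤ) k ×ˢ Finset.Icc (-k : ℤ) k
  have hsub : {h : DA m | TwoSyllable m h ∧ ℓD m h ≤ k} ⊆ f '' B := by
    rintro h ⟨hh, hk⟩
    obtain ⟨x, i, j, rfl⟩ := hh.exists_zpow
    rw [ℓD_zpow_mul_zpow hm] at hk
    refine ⟨(x, i, j), ?_, rfl⟩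
    simp only [B, Finset.mem_coe, Finset.mem_product, Finset.mem_univ, Finset.mem_Icc, true_and]
    omega
  have hcard : (Finset.Icc (-k : ℤ) k).card = 2 * k + 1 := by
    rw [Int.card_Icc]
    omega
  refine (Set.encard_le_encard hsub).trans ((Set.encard_image_le _ _).trans_eq ?_)
  rw [Set.encard_coe_eq_coe_finsetCard, Finset.card_product, Finset.card_product, hcard,
    Finset.card_univ, ZMod.card, sq]

lemma encard_le_of_forall_le_add {I : Set ℕ} {k : ℕ} (hI : ∀ i ∈ I, ∀ j ∈ I, j ≤ i + k) :
    I.encard ≤ (k + 1 : ℕ) := by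
  rcases I.eq_empty_or_nonempty with rfl | hne
  · simp
  have hsub : I ⊆ (Finset.Icc (sInf I) (sInf I + k) : Set ℕ) := fun j hj =>
    Finset.mem_coe.2 (Finset.mem_Icc.2 ⟨Nat.sInf_le hj, hI _ (Nat.sInf_mem hne) j hj⟩)
  refine (Set.encard_le_encard hsub).trans_eq ?_
  rw [Set.encard_coe_eq_coe_finsetCard, Nat.card_Icc, add_assoc, Nat.add_sub_cancel_left]

lemma two_mul_le_ℓD (hm : 2 ≤ m) (x : ZMod 2) (i d : ℕ) :
    2 * d ≤ ℓD m (atom m x ^ i * atom m (x + 1) ^ d * (atom m x ^ (i + d))⁻¹) := by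
  have hlen := ℓD_zpow_mul_zpow hm (x + 1) d (-(i + d : ℕ))
  have hpow := (ℓD_pow_le (atom m x) i).trans (mul_le_of_le_one_right' (ℓD_atom_le x))
  have hmul := ℓD_mul_le (atom m x ^ i)⁻¹
    (atom m x ^ i * atom m (x + 1) ^ d * (atom m x ^ (i + d))⁻¹)
  rw [add_one_add_one_eq_self, zpow_natCast, zpow_neg, zpow_natCast] at hlen
  rw [mul_assoc (atom m x ^ i), inv_mul_cancel_left, hlen, ℓD_inv] at hmul
  rw [mul_assoc (atom m x ^ i)]
  omega

lemma encard_left_factor_le (hm : 2 ≤ m) (g : DA m) (x : ZMod 2) (k N : ℕ) :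
    {h | ℓD m h ≤ k ∧ ∃ i ≤ N, h * (atom m x ^ i * atom m (x + 1) ^ (N - i)) = g}.encard ≤
      (k + 1 : ℕ) := by
  let f (i : ℕ) : DA m := g * (atom m x ^ i * atom m (x + 1) ^ (N - i))⁻¹
  let I : Set ℕ := {i | i ≤ N ∧ ℓD m (f i) ≤ k}
  have hsub : {h | ℓD m h ≤ k ∧ ∃ i ≤ N, h * (atom m x ^ i * atom m (x + 1) ^ (N - i)) = g} ⊆
      f '' I := by
    rintro h ⟨hk, i, hi, hg⟩
    have hf : f i = h := mul_inv_eq_of_eq_mul hg.symm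
    exact ⟨i, ⟨hi, hf ▸ hk⟩, hf⟩
  refine (Set.encard_le_encard hsub).trans ((Set.encard_image_le _ _).trans
    (encard_le_of_forall_le_add ?_))
  rintro i ⟨-, hik⟩ j ⟨hj, hjk⟩
  by_contra! hij
  obtain ⟨d, rfl⟩ := Nat.exists_eq_add_of_le (by omega : i ≤ j)
  have hquot : (f i)⁻¹ * f (i + d) =
      atom m x ^ i * atom m (x + 1) ^ d * (atom m x ^ (i + d))⁻¹ := by
    have hsplit : N - i = d + (N - (i + d)) := by omega
    simp only [f, hsplit, pow_add, mul_inv_rev, inv_inv]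
    group
  have hlong := two_mul_le_ℓD hm x i d
  have hshort := ℓD_mul_le (f i)⁻¹ (f (i + d))
  rw [ℓD_inv, hquot] at hshort
  omega

lemma encard_right_twoSyllable_le (hm : 2 ≤ m) {g : DA m} (hg : posElt m g) (k : ℕ) :
    {h | IsLeftDiv (ℓD m) h g ∧ ℓD m h = k ∧ TwoSyllable m (h⁻¹ * g)}.encard ≤
      (2 * (k + 1) : ℕ) := by
  let A (x : ZMod 2) : Set (DA m) := {h | ℓD m h ≤ k ∧
    ∃ i ≤ ℓD m g - k, h * (atom m x ^ i * atom m (x + 1) ^ (ℓD m g - k - i)) = g}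
  have hsub : {h | IsLeftDiv (ℓD m) h g ∧ ℓD m h = k ∧ TwoSyllable m (h⁻¹ * g)} ⊆ A 0 ∪ A 1 := by
    rintro h ⟨hdiv, hk, hsyl⟩
    suffices ∃ x, h ∈ A x by
      obtain ⟨x, hx⟩ := this
      fin_cases x
      exacts [.inl hx, .inr hx]
    obtain ⟨x, i, j, hij⟩ := hsyl.exists_zpow
    have hdeg : deg (h⁻¹ * g) = ℓD m (h⁻¹ * g) := by
      have hdeg_h := hdiv.deg_eq_of_posElt hg
      have hdeg_g := posElt_iff_deg_eq.1 hg
      rw [IsLeftDiv] at hdiv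
      rw [deg_mul, deg_inv]
      omega
    have hlen : ℓD m (h⁻¹ * g) = ℓD m g - k := by
      rw [IsLeftDiv] at hdiv
      omega
    have hsum := hlen
    rw [hij, ℓD_zpow_mul_zpow hm] at hsum
    rw [hlen, hij, deg_mul, deg_zpow, deg_zpow, deg_atom, deg_atom, mul_one, mul_one] at hdeg
    obtain ⟨a, rfl⟩ := Int.eq_ofNat_of_zero_le (by omega : 0 ≤ i)
    obtain rfl : j = (ℓD m g - k - a : ℕ) := by omega
    refine ⟨x, hk.le, a, by omega, ?_⟩
    rw [← zpow_natCast, ← zpow_natCast, ← hij, mul_inv_cancel_left]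
  calc _ ≤ (A 0).encard + (A 1).encard :=
      (Set.encard_le_encard hsub).trans (Set.encard_union_le _ _)
    _ ≤ (k + 1 : ℕ) + (k + 1 : ℕ) :=
      add_le_add (encard_left_factor_le hm g 0 k _) (encard_left_factor_le hm g 1 k _)
    _ = (2 * (k + 1) : ℕ) := by rw [two_mul, Nat.cast_add (k + 1)]

lemma exists_isLeftDiv_vert_eq [NeZero m] {g h : DA m} {k₁ k₂ : ℕ} (hdiv : IsLeftDiv (ℓD m) h g)
    (h₁ : IsLeftDiv (ℓD m) (Delta m ^ k₁) h) (h₂ : IsLeftDiv (ℓD m) (Delta m ^ k₂) (h⁻¹ * g))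
    (hg : IsLeftDiv (ℓD m) (Delta m ^ (k₁ + k₂)) g) :
    ∃ u, IsLeftDiv (ℓD m) u ((Delta m ^ (k₁ + k₂))⁻¹ * g) ∧ ℓD m u ≤ ℓD m h ∧
      vert u = vert ((Delta m ^ (k₁ + k₂))⁻¹ * h) := by
  have hlen : ℓD m ((Delta m ^ (k₁ + k₂))⁻¹ * h * Delta m ^ k₂) =
      ℓD m ((Delta m ^ k₁)⁻¹ * h) := by
    rw [← ℓD_Delta_zpow_conj k₂]
    congr 1
    rw [pow_add]
    group
  rw [IsLeftDiv] at h₁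
  refine ⟨(Delta m ^ (k₁ + k₂))⁻¹ * h * Delta m ^ k₂, ?_, by omega, vert_mul_Delta_pow _ _⟩
  refine isLeftDiv_of_add_le (q := (Delta m ^ k₂)⁻¹ * (h⁻¹ * g)) (by group) ?_
  rw [IsLeftDiv] at hdiv h₂ hg
  rw [ℓD_Delta_pow] at h₁ h₂ hg
  rw [add_mul] at hg
  omega

lemma encard_isMaxDeltaPow_add_le [NeZero m] {g : DA m} (hg : posElt m g) (k : ℕ) :
    {h | IsLeftDiv (ℓD m) h g ∧ ℓD m h = k ∧ ∃ k₁ k₂, IsMaxDeltaPow m k₁ h ∧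
      IsMaxDeltaPow m k₂ (h⁻¹ * g) ∧ IsMaxDeltaPow m (k₁ + k₂) g}.encard ≤
      ((k + 1) * m : ℕ) := by
  set S := {h | IsLeftDiv (ℓD m) h g ∧ ℓD m h = k ∧ ∃ k₁ k₂, IsMaxDeltaPow m k₁ h ∧
    IsMaxDeltaPow m k₂ (h⁻¹ * g) ∧ IsMaxDeltaPow m (k₁ + k₂) g}
  by_cases hmax : ∃ d, IsMaxDeltaPow m d g
  · obtain ⟨d, hd⟩ := hmax
    have hmaps : Set.MapsTo (fun h => vert ((Delta m ^ d)⁻¹ * h)) S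
        (vert '' {u | IsLeftDiv (ℓD m) u ((Delta m ^ d)⁻¹ * g) ∧ ℓD m u ≤ k}) := by
      rintro h ⟨hdiv, hk, k₁, k₂, h₁, h₂, h₁₂⟩
      obtain rfl : d = k₁ + k₂ := (h₁₂.2 _ hd.1).antisymm (hd.2 _ h₁₂.1)
      obtain ⟨u, hu, hle, hvert⟩ := exists_isLeftDiv_vert_eq hdiv h₁.1 h₂.1 hd.1
      exact ⟨u, ⟨hu, hle.trans hk.le⟩, hvert⟩
    have hinj : Set.InjOn (fun h => vert ((Delta m ^ d)⁻¹ * h)) S := by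
      rintro h ⟨hdiv, hk, -⟩ h' ⟨hdiv', hk', -⟩ heq
      refine mul_left_cancel (eq_of_vert_eq_of_deg_eq heq ?_)
      rw [deg_mul, deg_mul, hdiv.deg_eq_of_posElt hg, hdiv'.deg_eq_of_posElt hg, hk, hk']
    exact (Set.encard_le_encard_of_injOn hmaps hinj).trans
      ((hd.deltaFree_inv_mul hg).encard_vert_image_le k)
  · have hempty : S = ∅ := Set.eq_empty_of_forall_notMem
      fun h ⟨_, _, _, _, _, _, h₁₂⟩ => hmax ⟨_, h₁₂⟩
    simp [hempty]

end Counting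

section Permissible

variable {m : ℕ}

/-- The left factors of length `k` in the permissible factorisations of `g`. -/
def permissibleLeft (g : DA m) (k : ℕ) : Set (DA m) :=
  {h | ℓD m h = k ∧ PermDA m g (h, h⁻¹ * g)}

lemma eq_one_of_posElt_of_negElt {g : DA m} (hpos : posElt m g) (hneg : negElt m g) : g = 1 := by
  have hinv : posElt m g⁻¹ := by
    rwa [negElt, ← Set.inv_singleton, ← Set.inv_insert, Submonoid.closure_inv] at hneg
  rw [posElt_iff_deg_eq, deg_inv, ℓD_inv] at hinv
  rw [posElt_iff_deg_eq] at hpos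
  exact eq_one_of_ℓD_eq_zero (by omega)

lemma encard_permissibleLeft_le_of_posElt (hm : 2 ≤ m) {g : DA m} (hg : posElt m g) (k : ℕ) :
    (permissibleLeft g k).encard ≤ ((2 * m + 10) * (k + 1) ^ 2 : ℕ) := by
  have : NeZero m := ⟨by omega⟩
  have hsub : permissibleLeft g k ⊆ {h | TwoSyllable m h ∧ ℓD m h ≤ k} ∪
      {h | IsLeftDiv (ℓD m) h g ∧ ℓD m h = k ∧ TwoSyllable m (h⁻¹ * g)} ∪
      {h | IsLeftDiv (ℓD m) h g ∧ ℓD m h = k ∧ ∃ k₁ k₂, IsMaxDeltaPow m k₁ h ∧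
        IsMaxDeltaPow m k₂ (h⁻¹ * g) ∧ IsMaxDeltaPow m (k₁ + k₂) g} := by
    rintro h ⟨hk, -, hdiv, hsign⟩
    rcases hsign (.inl hg) with hsyl | hsyl | ⟨-, -, -, hmax⟩ | ⟨hneg, -⟩
    · exact .inl (.inl ⟨hsyl, hk.le⟩)
    · exact .inl (.inr ⟨hdiv, hk, hsyl⟩)
    · exact .inr ⟨hdiv, hk, hmax⟩
    · have hg₁ : ℓD m g = 0 := by rw [eq_one_of_posElt_of_negElt hg hneg, ℓD_one]
      have hh : h = 1 := eq_one_of_ℓD_eq_zero (Nat.eq_zero_of_add_eq_zero_right (hdiv.trans hg₁))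
      exact .inl (.inl ⟨hh ▸ twoSyllable_one, hk.le⟩)
  calc _ ≤ _ := Set.encard_le_encard hsub
    _ ≤ (2 * (2 * k + 1) ^ 2 : ℕ) + (2 * (k + 1) : ℕ) + ((k + 1) * m : ℕ) :=
      (Set.encard_union_le _ _).trans (add_le_add ((Set.encard_union_le _ _).trans
        (add_le_add (encard_twoSyllable_le hm k) (encard_right_twoSyllable_le hm hg k)))
        (encard_isMaxDeltaPow_add_le hg k))
    _ ≤ ((2 * m + 10) * (k + 1) ^ 2 : ℕ) := by
      norm_cast
      nlinarith [Nat.zero_le (m * k ^ 2), Nat.zero_le (m * k)]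

lemma encard_permissibleLeft_le_of_not_signed [NeZero m] {g : DA m}
    (hg : ¬ (posElt m g ∨ negElt m g)) (k : ℕ) :
    (permissibleLeft g k).encard ≤ ((2 * m + 10) * (k + 1) ^ 2 : ℕ) := by
  have hsub : permissibleLeft g k ⊆ {h | IsLeftDiv (ℓD m) h g ∧ ℓD m h ≤ k} :=
    fun h hh => ⟨hh.2.2.1, hh.1.le⟩
  refine (Set.encard_le_encard hsub).trans
    (((deltaFree_of_not_signed hg).encard_leftDiv_le k).trans ?_)
  norm_cast
  nlinarith [Nat.zero_le (m * k ^ 2), Nat.zero_le (m * k)]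

lemma encard_permissibleLeft_le (hm : 2 ≤ m) (g : DA m) (k : ℕ) :
    (permissibleLeft g k).encard ≤ ((2 * m + 10) * (k + 1) ^ 2 : ℕ) := by
  have : NeZero m := ⟨by omega⟩
  by_cases hpos : posElt m g
  · exact encard_permissibleLeft_le_of_posElt hm hpos k
  by_cases hneg : negElt m g
  · have hmaps : Set.MapsTo (genInv m) (permissibleLeft g k) (permissibleLeft (genInv m g) k) :=
      fun h hh => ⟨(ℓD_genInv h).trans hh.1, by simpa using hh.2.genInv⟩
    exact (Set.encard_le_encard_of_injOn hmaps genInv_injective.injOn).trans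
      (encard_permissibleLeft_le_of_posElt hm (posElt_genInv_iff.2 hneg) k)
  · exact encard_permissibleLeft_le_of_not_signed (not_or_intro hpos hneg) k

end Permissible

theorem dihedral_D1_general (m : ℕ) (hm : 2 ≤ m) :
    ∃ P : Polynomial ℝ, (∀ c : ℕ, 0 ≤ P.coeff c) ∧
      ∀ (g : DA m) (k : ℕ),
        {g₁ : DA m | ℓD m g₁ = k ∧ PermDA m g (g₁, g₁⁻¹ * g)}.Finite ∧
        ({g₁ : DA m | ℓD m g₁ = k ∧ PermDA m g (g₁, g₁⁻¹ * g)}.ncard : ℝ) ≤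
          P.eval (k : ℝ) := by
  let P : Polynomial ℕ := Polynomial.C (2 * m + 10) * (Polynomial.X + 1) ^ 2
  refine ⟨P.map (Nat.castRingHom ℝ), fun c => ?_, fun g k => ?_⟩
  · rw [Polynomial.coeff_map]
    exact Nat.cast_nonneg _
  · obtain ⟨hfin, hcard⟩ :=
      Set.encard_le_coe_iff_finite_ncard_le.1 (encard_permissibleLeft_le hm g k)
    refine ⟨hfin, (Nat.cast_le.2 hcard).trans_eq ?_⟩
    simp [P]

/-- **Corollary (D1 for dihedral Artin groups).** There is a polynomial `P` bounding,
for every `g ∈ DA(m)`, the number of permissible left divisors of `g` of length `k`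
by `P(k)`. -/
theorem dihedral_D1
    (m : ℕ) (hm : 3 ≤ m) :
    ∃ P : Polynomial ℝ, (∀ c : ℕ, 0 ≤ P.coeff c) ∧
      ∀ (g : DA m) (k : ℕ),
        {g₁ : DA m | ℓD m g₁ = k ∧ PermDA m g (g₁, g₁⁻¹ * g)}.Finite ∧
        ({g₁ : DA m | ℓD m g₁ = k ∧ PermDA m g (g₁, g₁⁻¹ * g)}.ncard : ℝ) ≤
          P.eval (k : ℝ) := by
  exact dihedral_D1_general m (by omega)

end ArtinRD
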